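/- arXiv:1410.7156 — 8 statements merged into one kernel-verified Lean document; each statement's English description precedes it below -/
import Mathlib

section
/- Let L be an R-submodule of K^m with R^m ⊆ L and dim_ℂ(L/R^m) finite, and let w ∈ ℂ. Then L' := {x ∈ K^m : (z − w)·x ∈ L} is an R-submodule of K^m containing L, and dim_ℂ(L'/L) = m. -/
open Polynomial

set_option synthInstance.maxHeartbeats 1000000
set_option maxHeartbeats 1000000

noncomputable section

abbrev KM (m : ℕ) := Fin m → RatFunc ℂ

abbrev SubM (m : ℕ) := Submodule (Polynomial ℂ) (KM m)

def polyL0 (m : ℕ) : SubM m :=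
  Submodule.pi Set.univ fun _ => LinearMap.range (Algebra.linearMap (Polynomial ℂ) (RatFunc ℂ))

abbrev QuotMod (m : ℕ) (A B : SubM m) := ↥B ⧸ (A.comap B.subtype)

def fdim (m : ℕ) (A B : SubM m) : ℕ := Module.finrank ℂ (QuotMod m A B)

def zmul (m : ℕ) (w : ℂ) : KM m →ₗ[Polynomial ℂ] KM m :=
  (Polynomial.X - Polynomial.C w) • LinearMap.id

def quotSmul (m : ℕ) (p : Polynomial ℂ) (A B : SubM m) :
    QuotMod m A B →ₗ[ℂ] QuotMod m A B where
  toFun v := p • v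
  map_add' x y := smul_add p x y
  map_smul' c x := smul_comm p c x

def IsYChain (m n : ℕ) (k : ℕ → ℕ) (w : ℕ → ℂ) (L : ℕ → SubM m) : Prop :=
  L 0 = polyL0 m ∧
  (∀ i < n, L i ≤ L (i + 1)) ∧
  (∀ i < n, FiniteDimensional ℂ (QuotMod m (L i) (L (i + 1)))) ∧
  (∀ i < n, fdim m (L i) (L (i + 1)) = k (i + 1)) ∧
  (∀ i < n, ∀ x ∈ L (i + 1), zmul m (w (i + 1)) x ∈ L i)

/-!
Put `R = ℂ[z]` and `p = z - w`. Multiplication by `p` is bijective on `K^m`, and it carries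
`L' = {x | p x ∈ L}` onto `L` and `L` onto `p L`, so `L' / L ≃ L / p L`. Being an extension of the
finite-dimensional `L / R^m` by `R^m`, the torsion-free module `L` is finitely generated, hence free
because `R` is a principal ideal domain; its rank is `m` since it spans `K^m` over `K`. Therefore
`L / p L ≃ (R / p)^m`, which has dimension `m * deg p = m`.
-/

/-- The isomorphism `f⁻¹(N) / N ≃ N / f(N)` induced by a bijective endomorphism `f`, with which the
quotient `L' / L` is computed. No inclusion between `N` and `f(N)` is assumed: the denominators
stand for `N ∩ f⁻¹(N)` and `f(N) ∩ N`. -/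
def quotComapEquivQuotMap {A M : Type*} [Ring A] [AddCommGroup M] [Module A M]
    (f : M →ₗ[A] M) (hf : Function.Bijective f) (N : Submodule A M) :
    (N.comap f ⧸ N.submoduleOf (N.comap f)) ≃ₗ[A] N ⧸ (N.map f).submoduleOf N :=
  Submodule.Quotient.equiv _ _ ((LinearEquiv.ofBijective f hf).ofSubmodule' N) <| by
    ext y
    constructor
    · rintro ⟨x, hx, rfl⟩
      exact ⟨x, hx, rfl⟩
    · rintro ⟨x, hx, hxy⟩
      have hfx : f x ∈ N := hxy ▸ y.2
      exact ⟨⟨x, hfx⟩, hx, Subtype.ext hxy⟩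

open scoped Pointwise in
lemma submoduleOf_map_smul_id {A M : Type*} [CommRing A] [AddCommGroup M] [Module A M]
    (a : A) (N : Submodule A M) :
    (N.map (a • LinearMap.id : M →ₗ[A] M)).submoduleOf N = a • ⊤ := by
  ext y
  simp [Submodule.submoduleOf, Submodule.mem_smul_pointwise_iff_exists, Subtype.ext_iff]

lemma finrank_quotSMulTop {k A M : Type*} [Field k] [CommRing A] [Nontrivial A] [Algebra k A]
    [AddCommGroup M] [Module A M] [Module k M] [IsScalarTower k A M]
    [Module.Free A M] [Module.Finite A M] (a : A) :
    Module.finrank k (QuotSMulTop a M) =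
      Module.finrank A M * Module.finrank k (A ⧸ Ideal.span {a}) := by
  let e : QuotSMulTop a M ≃ₗ[A] Fin (Module.finrank A M) →₀ A ⧸ Ideal.span {a} :=
    QuotSMulTop.equivQuotTensor a M ≪≫ₗ (Module.finBasis A M).repr.lTensor _ ≪≫ₗ
      TensorProduct.finsuppScalarRight A A _ _
  rw [(e.restrictScalars k).finrank_eq]
  generalize Module.finrank A M = n
  calc Module.finrank k (Fin n →₀ A ⧸ Ideal.span {a})
    _ = Cardinal.toNat _ := congrArg Cardinal.toNat (rank_finsupp k (A ⧸ Ideal.span {a}) (Fin n))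
    _ = n * Module.finrank k (A ⧸ Ideal.span {a}) := by simp [Module.finrank]

lemma fg_of_fg_of_finite_quotient {A M : Type*} [Ring A] [AddCommGroup M] [Module A M]
    {N L : Submodule A M} (hNL : N ≤ L) (hN : N.FG)
    [Module.Finite A (L ⧸ N.submoduleOf L)] : L.FG := by
  have : Module.Finite A N := Module.Finite.iff_fg.mpr hN
  have : Module.Finite A (N.submoduleOf L) :=
    Module.Finite.equiv (Submodule.submoduleOfEquivOfLe hNL).symm
  exact Module.Finite.iff_fg.mp (Module.Finite.of_submodule_quotient (N.submoduleOf L))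

lemma isLattice_pi_range_algebra_linearMap (A K : Type*) {ι : Type*} [Finite ι]
    [CommRing A] [CommRing K] [Algebra A K] :
    (Submodule.pi Set.univ fun _ : ι => LinearMap.range (Algebra.linearMap A K)).IsLattice K where
  fg := Submodule.fg_pi fun _ => Module.Finite.iff_fg.mp inferInstance
  span_eq_top := by
    classical
    rw [eq_top_iff, ← (Pi.basisFun K ι).span_eq]
    refine Submodule.span_mono ?_
    rintro _ ⟨i, rfl⟩ j -
    rw [Pi.basisFun_apply]
    exact ⟨(Pi.single i 1 : ι → A) j, by by_cases h : j = i <;> simp [h]⟩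

theorem statement0_general {k K V : Type*} [Field k] [Field K] [Algebra k[X] K]
    [IsFractionRing k[X] K] [AddCommGroup V] [Module K V] [Module k[X] V] [Module k V]
    [IsScalarTower k[X] K V] [IsScalarTower k k[X] V]
    (L : Submodule k[X] V) [L.IsLattice K] {p : k[X]} (hp : p ≠ 0) {L' : Submodule k[X] V}
    (hL' : L' = L.comap (p • LinearMap.id)) :
    (∀ x : V, x ∈ L' ↔ p • x ∈ L) ∧
    L ≤ L' ∧
    Module.finrank k (L' ⧸ L.submoduleOf L') = Module.finrank K V * p.natDegree := by
  subst hL'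
  refine ⟨fun _ => Iff.rfl, fun _ hx => L.smul_mem p hx, ?_⟩
  have smul_bijective : Function.Bijective (p • · : V → V) := by
    have hpK : algebraMap k[X] K p ≠ 0 := by simpa using hp
    simpa only [algebraMap_smul] using MulAction.bijective₀ (α := V) hpK
  have : Module.Free k[X] L := Submodule.IsLattice.free K L
  have : Module.Finite k[X] L := Submodule.IsLattice.finite K L
  have finrank_L : Module.finrank k[X] L = Module.finrank K V :=
    congrArg Cardinal.toNat (Submodule.IsLattice.rank' K L)
  rw [((quotComapEquivQuotMap _ smul_bijective L).restrictScalars k).finrank_eq,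
    submoduleOf_map_smul_id, finrank_quotSMulTop, finrank_L, finrank_quotient_span_eq_natDegree]

lemma isLattice_of_polyL0_le {m : ℕ} {L : SubM m} (hL0 : polyL0 m ≤ L)
    [FiniteDimensional ℂ (QuotMod m (polyL0 m) L)] : L.IsLattice (RatFunc ℂ) := by
  have : (polyL0 m).IsLattice (RatFunc ℂ) := isLattice_pi_range_algebra_linearMap ℂ[X] (RatFunc ℂ)
  have : Module.Finite ℂ[X] (L ⧸ (polyL0 m).submoduleOf L) :=
    Module.Finite.of_restrictScalars_finite ℂ ℂ[X] (QuotMod m (polyL0 m) L)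
  exact Submodule.IsLattice.of_le_of_isLattice_of_fg (RatFunc ℂ) hL0
    (fg_of_fg_of_finite_quotient hL0 Submodule.IsLattice.fg)

/-- Let `L` be an `ℂ[z]`-submodule of `K^m` with `R^m ⊆ L` and `dim_ℂ(L/R^m)`
finite, and `w ∈ ℂ`. Then `L' = {x : (z - w) • x ∈ L}` is an `R`-submodule of `K^m`
containing `L` and `dim_ℂ(L'/L) = m`. -/
theorem statement0 (m : ℕ) (hm : 2 ≤ m)
    (L : SubM m) (hL0 : polyL0 m ≤ L)
    (hfin : FiniteDimensional ℂ (QuotMod m (polyL0 m) L))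
    (w : ℂ) (L' : SubM m)
    (hL' : L' = L.comap (zmul m w)) :
    (∀ x : KM m, x ∈ L' ↔ (Polynomial.X - Polynomial.C w) • x ∈ L) ∧
    L ≤ L' ∧
    fdim m L L' = m := by
  have : L.IsLattice (RatFunc ℂ) := isLattice_of_polyL0_le hL0
  obtain ⟨mem_iff, le, finrank_eq⟩ := statement0_general L (X_sub_C_ne_zero w) hL'
  exact ⟨mem_iff, le, finrank_eq.trans (by simp)⟩
end
end

section
/- Fix k̲ = (k₁,…,k_n) and w̲ = (w₁,…,w_n), and let k̲' = (k₁,…,k_{n−1}), w̲' = (w₁,…,w_{n−1}). Let (L₁,…,L_{n−1}) ∈ Y(k̲')_{w̲'} and set P := {x ∈ K^m : (z − w_n)·x ∈ L_{n−1}}. Then: (a) every ℂ-subspace L_n of K^m with L_{n−1} ⊆ L_n ⊆ P is an R-submodule; (b) a subspace L_n completes the chain to a point of Y(k̲)_w̲ if and only if L_{n−1} ⊆ L_n ⊆ P and dim_ℂ(L_n/L_{n−1}) = k_n. Consequently, the fibre of the forgetful map Y(k̲)_w̲ → Y(k̲')_{w̲'} over (L₁,…,L_{n−1}) is in bijection,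 via L_n ↦ L_n/L_{n−1}, with the set of k_n-dimensional ℂ-subspaces of the m-dimensional ℂ-vector space P/L_{n−1}. -/
/-!
Put `P = (z - w_n)⁻¹ L` with `L = L_{n-1}`. Every polynomial `p` is congruent to the constant
`p(w_n)` modulo `z - w_n`, so `p` acts on `P / L` as the scalar `p(w_n)`; hence subspaces and
submodules between `L` and `P` are the same thing, and the fibre is described by the correspondence
between the submodules of `P / L` and those between `L` and `P`.

Multiplication by `z - w_n` identifies `P` with `L`, hence `P / L` with `L / (z - w_n) L`, which is
`ℂ^m` because `L` is free of rank `m`. This freeness propagates along the chain: `L_i` lies between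
two free modules of rank `m`, namely `L_{i-1}` and `(z - w_i)⁻¹ L_{i-1} ≅ L_{i-1}`, over a principal
ideal domain.
-/

open Polynomial

set_option synthInstance.maxHeartbeats 1000000
set_option maxHeartbeats 1000000

noncomputable section

section Subquotient

variable {R V : Type*} [Ring R] [AddCommGroup V] [Module R V] {N P M : Submodule R V}

/-- The image of `M` in the quotient `P / N`; for `N ≤ M ≤ P` it is `M / N`. Neither inclusion is
built in: `P / N` stands for `P / (N ⊓ P)` and only `M ⊓ P` matters. -/
def subquotient (N P M : Submodule R V) : Submodule R (P ⧸ N.comap P.subtype) :=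
  (M.comap P.subtype).map (N.comap P.subtype).mkQ

theorem map_subtype_comap_mkQ_subquotient (hNM : N ≤ M) (hMP : M ≤ P) :
    ((subquotient N P M).comap (N.comap P.subtype).mkQ).map P.subtype = M := by
  rw [subquotient, Submodule.comap_map_mkQ, sup_eq_right.2 (Submodule.comap_mono hNM),
    Submodule.map_comap_subtype, inf_eq_right.2 hMP]

theorem subquotient_map_subtype_comap_mkQ (U : Submodule R (P ⧸ N.comap P.subtype)) :
    subquotient N P ((U.comap (N.comap P.subtype).mkQ).map P.subtype) = U := by
  rw [subquotient, Submodule.comap_map_eq_of_injective P.subtype_injective,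
    Submodule.map_comap_eq_of_surjective (Submodule.mkQ_surjective _)]

theorem le_map_subtype_comap_mkQ (hNP : N ≤ P) (U : Submodule R (P ⧸ N.comap P.subtype)) :
    N ≤ (U.comap (N.comap P.subtype).mkQ).map P.subtype :=
  calc N = (N.comap P.subtype).map P.subtype := by
        rw [Submodule.map_comap_subtype, inf_eq_right.2 hNP]
    _ ≤ _ := Submodule.map_mono (Submodule.le_comap_mkQ _ U)

theorem bijOn_subquotient (hNP : N ≤ P) :
    Set.BijOn (subquotient N P) (Set.Icc N P) Set.univ :=
  Set.InvOn.bijOn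
    ⟨fun _ hM => map_subtype_comap_mkQ_subquotient hM.1 hM.2,
      fun U _ => subquotient_map_subtype_comap_mkQ U⟩
    (Set.mapsTo_univ _ _)
    fun U _ => ⟨le_map_subtype_comap_mkQ hNP U, Submodule.map_subtype_le _ _⟩

/-- `M / N` as a submodule of `P / N`; it turns dimensions of quotients into dimensions of
subspaces. -/
def quotientEquivSubquotient (N : Submodule R V) (hMP : M ≤ P) :
    (M ⧸ N.comap M.subtype) ≃ₗ[R] subquotient N P M :=
  let f := (N.comap P.subtype).mkQ ∘ₗ Submodule.inclusion hMP
  have ker_f : N.comap M.subtype = LinearMap.ker f := by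
    rw [LinearMap.ker_comp, Submodule.ker_mkQ, ← Submodule.comap_comp,
      Submodule.subtype_comp_inclusion]
  have range_f : LinearMap.range f = subquotient N P M := by
    rw [LinearMap.range_comp, Submodule.range_inclusion, subquotient]
  Submodule.quotEquivOfEq _ _ ker_f ≪≫ₗ f.quotKerEquivRange ≪≫ₗ LinearEquiv.ofEq _ _ range_f

end Subquotient

section SMulComap

open scoped Pointwise

variable {R V : Type*} [CommRing R] [AddCommGroup V] [Module R V] {r : R}

/-- The submodule `r⁻¹N` of all `x` with `r • x ∈ N`. For `r = X - w_n` and `N = L_{n-1}` it is the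
module `P` of the theorem. -/
def smulComap (r : R) (N : Submodule R V) : Submodule R V :=
  N.comap (LinearMap.lsmul R V r)

theorem mem_smulComap {N : Submodule R V} {x : V} : x ∈ smulComap r N ↔ r • x ∈ N :=
  Iff.rfl

theorem le_smulComap (r : R) (N : Submodule R V) : N ≤ smulComap r N :=
  fun _ hx => N.smul_mem r hx

/-- The isomorphism `r⁻¹N ≃ N` given by multiplication by `r`. -/
def smulComapEquiv (hr : Function.Bijective fun x : V => r • x) (N : Submodule R V) :
    smulComap r N ≃ₗ[R] N :=
  (LinearEquiv.ofBijective (LinearMap.lsmul R V r) hr).ofSubmodule' N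

theorem map_smulComapEquiv (hr : Function.Bijective fun x : V => r • x) (N : Submodule R V) :
    (N.comap (smulComap r N).subtype).map (smulComapEquiv hr N).toLinearMap = r • ⊤ := by
  ext y
  simp only [Submodule.mem_map, Submodule.mem_comap, Submodule.mem_smul_pointwise_iff_exists,
    Submodule.mem_top, true_and]
  constructor
  · rintro ⟨x, hx, rfl⟩
    exact ⟨⟨x, hx⟩, rfl⟩
  · rintro ⟨x, rfl⟩
    exact ⟨⟨x, le_smulComap r N x.2⟩, x.2, rfl⟩

theorem smul_smulComap_quotient_eq_zero (N : Submodule R V)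
    (u : smulComap r N ⧸ N.comap (smulComap r N).subtype) : r • u = 0 := by
  obtain ⟨x, rfl⟩ := Submodule.mkQ_surjective _ u
  rw [← map_smul, Submodule.mkQ_apply, Submodule.Quotient.mk_eq_zero]
  exact x.2

/-- The isomorphism `r⁻¹N / N ≃ N / rN` given by multiplication by `r`. -/
def smulComapQuotientEquiv (hr : Function.Bijective fun x : V => r • x) (N : Submodule R V) :
    (smulComap r N ⧸ N.comap (smulComap r N).subtype) ≃ₗ[R] QuotSMulTop r N :=
  Submodule.Quotient.equiv _ _ (smulComapEquiv hr N) (map_smulComapEquiv hr N)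

/-- The isomorphism `M / rM ≃ (R / r)^ι` given by a basis of `M` indexed by `ι`. -/
def quotSMulTopEquivPi {ι M : Type*} [Fintype ι] [DecidableEq ι] [AddCommGroup M] [Module R M]
    (r : R) (b : Module.Basis ι R M) : QuotSMulTop r M ≃ₗ[R] ι → R ⧸ Ideal.span {r} :=
  QuotSMulTop.equivQuotTensor r M ≪≫ₗ b.equivFun.lTensor (R ⧸ Ideal.span {r}) ≪≫ₗ
    TensorProduct.piScalarRight R R (R ⧸ Ideal.span {r}) ι

theorem nonempty_basis_of_le_of_le [IsDomain R] [IsPrincipalIdealRing R] {ι : Type*} [Finite ι]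
    {N M P : Submodule R V} (hNM : N ≤ M) (hMP : M ≤ P) (bN : Module.Basis ι R N)
    (bP : Module.Basis ι R P) : Nonempty (Module.Basis ι R M) := by
  have := Fintype.ofFinite ι
  obtain ⟨d, bM⟩ := Submodule.basisOfPidOfLE hMP bP
  have := Module.Finite.of_basis bM
  have := Module.Finite.of_basis bP
  have card_le : Fintype.card ι ≤ d := by
    simpa [Module.finrank_eq_card_basis bN, Module.finrank_eq_card_basis bM]
      using Submodule.finrank_mono hNM
  have le_card : d ≤ Fintype.card ι := by
    simpa [Module.finrank_eq_card_basis bM, Module.finrank_eq_card_basis bP]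
      using Submodule.finrank_mono hMP
  exact ⟨bM.reindex (Fintype.equivFinOfCardEq (card_le.antisymm le_card)).symm⟩

theorem bijective_smul_of_algebraMap_ne_zero {F : Type*} [Field F] [Algebra R F] [Module F V]
    [IsScalarTower R F V] (hr : algebraMap R F r ≠ 0) :
    Function.Bijective fun x : V => r • x := by
  simpa only [algebraMap_smul] using MulAction.bijective₀ (α := V) hr

end SMulComap

section Evaluation

variable {K V : Type*} [CommRing K] [AddCommGroup V] [Module K V] [Module K[X] V]
  [IsScalarTower K K[X] V] {w : K} {N : Submodule K[X] V}

theorem smul_sub_eval_smul_mem {x : V} (hx : x ∈ smulComap (X - C w) N) (p : K[X]) :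
    p • x - p.eval w • x ∈ N := by
  obtain ⟨q, hq⟩ := X_sub_C_dvd_sub_C_eval (a := w) (p := p)
  have factor : p • x - p.eval w • x = q • (X - C w) • x := by
    rw [← algebraMap_smul K[X] (p.eval w) x, ← sub_smul, algebraMap_eq, hq, mul_comm, mul_smul]
  exact factor ▸ N.smul_mem q hx

theorem polynomial_smul_mem_of_le_of_le {S : Submodule K V} (hNS : (N : Set V) ⊆ S)
    (hSP : (S : Set V) ⊆ smulComap (X - C w) N) (p : K[X]) {x : V} (hx : x ∈ S) : p • x ∈ S := by
  have h := S.add_mem (hNS (smul_sub_eval_smul_mem (hSP hx) p)) (S.smul_mem (p.eval w) hx)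
  rwa [sub_add_cancel] at h

theorem restrictScalars_surjective_of_X_sub_C_smul_eq_zero
    (h : ∀ x : V, (X - C w) • x = 0) :
    Function.Surjective (Submodule.restrictScalars K : Submodule K[X] V → Submodule K V) := by
  intro S
  have smul_mem (p : K[X]) {x : V} (hx : x ∈ S) : p • x ∈ S :=
    polynomial_smul_mem_of_le_of_le (N := ⊥) (by simp) (fun y _ => h y) p hx
  exact ⟨{ S with smul_mem' := fun p _ hx => smul_mem p hx }, rfl⟩

/-- The isomorphism `(X - w)⁻¹N / N ≃ K^ι` given by a basis of `N` indexed by `ι`; it computes the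
dimension of the left-hand side. -/
def smulComapQuotientEquivPi {ι : Type*} [Fintype ι] [DecidableEq ι]
    (hw : Function.Bijective fun x : V => (X - C w) • x) (b : Module.Basis ι K[X] N) :
    (smulComap (X - C w) N ⧸ N.comap (smulComap (X - C w) N).subtype) ≃ₗ[K] ι → K :=
  (smulComapQuotientEquiv hw N ≪≫ₗ quotSMulTopEquivPi (X - C w) b).restrictScalars K ≪≫ₗ
    LinearEquiv.piCongrRight fun _ => (quotientSpanXSubCAlgEquiv w).toLinearEquiv

theorem bijOn_restrictScalars_subquotient (w : K) (d : ℕ) :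
    Set.BijOn (fun M => (subquotient N (smulComap (X - C w) N) M).restrictScalars K)
      {M | N ≤ M ∧ M ≤ smulComap (X - C w) N ∧ Module.finrank K (M ⧸ N.comap M.subtype) = d}
      {U | Module.finrank K U = d} := by
  have finrank_eq {M : Submodule K[X] V} (hM : M ≤ smulComap (X - C w) N) :=
    ((quotientEquivSubquotient N hM).restrictScalars K).finrank_eq
  have bij := bijOn_subquotient (le_smulComap (X - C w) N)
  refine ⟨fun M ⟨_, hMP, hd⟩ => (finrank_eq hMP).symm.trans hd,
    fun M hM M' hM' h => bij.injOn ⟨hM.1, hM.2.1⟩ ⟨hM'.1, hM'.2.1⟩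
      (Submodule.restrictScalars_injective K _ _ h), fun U hU => ?_⟩
  obtain ⟨U, rfl⟩ := restrictScalars_surjective_of_X_sub_C_smul_eq_zero
    (smul_smulComap_quotient_eq_zero N) U
  obtain ⟨M, ⟨hNM, hMP⟩, rfl⟩ := bij.surjOn (Set.mem_univ U)
  exact ⟨M, ⟨hNM, hMP, (finrank_eq hMP).trans hU⟩, rfl⟩

end Evaluation

section ModificationChain

variable {K V : Type*} [Field K] [AddCommGroup V] [Module K V] [Module K[X] V]
  [IsScalarTower K K[X] V] {m n d : ℕ} {c : K} {k : ℕ → ℕ} {w : ℕ → K}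
  {L₀ N M : Submodule K[X] V} {L L' : ℕ → Submodule K[X] V}

/-- `M` is a Hecke modification of `N` at the point `c` of length `d`: it contains `N`, the quotient
`M / N` has dimension `d`, and `X - c` annihilates this quotient. -/
structure IsHeckeModification (N : Submodule K[X] V) (d : ℕ) (c : K) (M : Submodule K[X] V) :
    Prop where
  le : N ≤ M
  finiteDimensional : FiniteDimensional K (M ⧸ N.comap M.subtype)
  finrank_eq : Module.finrank K (M ⧸ N.comap M.subtype) = d
  le_smulComap : M ≤ smulComap (X - C c) N

/-- The terms `L 0, …, L n` form a chain of successive Hecke modifications of `L₀`, the `i`-th one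
being of length `k i` at the point `w i`; the later terms of `L`, and `k 0` and `w 0`, are
irrelevant. -/
def IsHeckeChain (L₀ : Submodule K[X] V) (n : ℕ) (k : ℕ → ℕ) (w : ℕ → K)
    (L : ℕ → Submodule K[X] V) : Prop :=
  L 0 = L₀ ∧ ∀ i < n, IsHeckeModification (L i) (k (i + 1)) (w (i + 1)) (L (i + 1))

theorem isHeckeModification_iff (hc : Function.Bijective fun x : V => (X - C c) • x)
    (b : Module.Basis (Fin m) K[X] N) :
    IsHeckeModification N d c M ↔
      N ≤ M ∧ M ≤ smulComap (X - C c) N ∧ Module.finrank K (M ⧸ N.comap M.subtype) = d := by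
  refine ⟨fun h => ⟨h.le, h.le_smulComap, h.finrank_eq⟩, fun ⟨hNM, hMP, hd⟩ => ⟨hNM, ?_, hd, hMP⟩⟩
  have := Module.Finite.equiv (smulComapQuotientEquivPi hc b).symm
  have : Module.Finite K (subquotient N (smulComap (X - C c) N) M) :=
    FiniteDimensional.finiteDimensional_submodule
      ((subquotient N (smulComap (X - C c) N) M).restrictScalars K)
  exact Module.Finite.equiv ((quotientEquivSubquotient N hMP).restrictScalars K).symm

theorem isHeckeChain_succ_iff :
    IsHeckeChain L₀ (n + 1) k w L ↔
      IsHeckeChain L₀ n k w L ∧ IsHeckeModification (L n) (k (n + 1)) (w (n + 1)) (L (n + 1)) := by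
  simp only [IsHeckeChain, Nat.forall_lt_succ_right, and_assoc]

theorem IsHeckeChain.congr (hL : IsHeckeChain L₀ n k w L) (h : ∀ i ≤ n, L' i = L i) :
    IsHeckeChain L₀ n k w L' := by
  refine ⟨(h 0 n.zero_le).trans hL.1, fun i hi => ?_⟩
  rw [h i hi.le, h (i + 1) hi]
  exact hL.2 i hi

theorem IsHeckeChain.extend_iff (hL : IsHeckeChain L₀ n k w L) :
    IsHeckeChain L₀ (n + 1) k w (fun j => if j < n + 1 then L j else M) ↔
      IsHeckeModification (L n) (k (n + 1)) (w (n + 1)) M := by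
  have hL' : IsHeckeChain L₀ n k w (fun j => if j < n + 1 then L j else M) :=
    hL.congr fun i hi => if_pos (Nat.lt_succ_of_le hi)
  simp only [isHeckeChain_succ_iff, hL', true_and, lt_add_one, if_true, lt_irrefl, if_false]

theorem IsHeckeChain.nonempty_basis
    (hw : ∀ i, Function.Bijective fun x : V => (X - C (w i)) • x)
    (b : Module.Basis (Fin m) K[X] L₀) (hL : IsHeckeChain L₀ n k w L) :
    Nonempty (Module.Basis (Fin m) K[X] (L n)) := by
  induction n with
  | zero => exact ⟨b.map (LinearEquiv.ofEq _ _ hL.1.symm)⟩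
  | succ n ih =>
    obtain ⟨hL, step⟩ := isHeckeChain_succ_iff.1 hL
    obtain ⟨bN⟩ := ih hL
    exact nonempty_basis_of_le_of_le step.le step.le_smulComap bN
      (bN.map (smulComapEquiv (hw (n + 1)) (L n)).symm)

theorem statement1_general (hw : ∀ i, Function.Bijective fun x : V => (X - C (w i)) • x)
    (b : Module.Basis (Fin m) K[X] L₀) (hL : IsHeckeChain L₀ n k w L) :
    let P := smulComap (X - C (w (n + 1))) (L n)
    (∀ S : Submodule K V, (L n : Set V) ⊆ S → (S : Set V) ⊆ P → ∀ p : K[X], ∀ x ∈ S, p • x ∈ S) ∧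
    (∀ M, IsHeckeChain L₀ (n + 1) k w (fun j => if j < n + 1 then L j else M) ↔
      L n ≤ M ∧ M ≤ P ∧ Module.finrank K (M ⧸ (L n).comap M.subtype) = k (n + 1)) ∧
    Module.finrank K (P ⧸ (L n).comap P.subtype) = m ∧
    Function.Injective
      (fun M : {M // IsHeckeChain L₀ (n + 1) k w (fun j => if j < n + 1 then L j else M)} =>
        (subquotient (L n) P M).restrictScalars K) ∧
    ∀ U : Submodule K (P ⧸ (L n).comap P.subtype),
      (∃ M : {M // IsHeckeChain L₀ (n + 1) k w (fun j => if j < n + 1 then L j else M)},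
        (subquotient (L n) P M).restrictScalars K = U) ↔ Module.finrank K U = k (n + 1) := by
  intro P
  obtain ⟨bN⟩ := hL.nonempty_basis hw b
  have completes_iff (M) := (hL.extend_iff (M := M)).trans (isHeckeModification_iff (hw (n + 1)) bN)
  have bij := bijOn_restrictScalars_subquotient (N := L n) (w (n + 1)) (k (n + 1))
  simp only [← completes_iff] at bij
  refine ⟨fun S hNS hSP p x hx => polynomial_smul_mem_of_le_of_le hNS hSP p hx, completes_iff,
    ?_, bij.injOn.injective, fun U => ?_⟩
  · simpa using (smulComapQuotientEquivPi (hw (n + 1)) bN).finrank_eq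
  · simpa using Set.ext_iff.1 bij.image_eq U

end ModificationChain

section StandardLattice

/-- The standard basis of the lattice `ℂ[z]^m` in `ℂ(z)^m`. -/
def polyL0Basis (m : ℕ) : Module.Basis (Fin m) ℂ[X] (polyL0 m) :=
  (Pi.basisFun ℂ[X] (Fin m)).map <|
    LinearEquiv.ofInjective ((Algebra.linearMap ℂ[X] (RatFunc ℂ)).compLeft (Fin m))
      (RatFunc.algebraMap_injective ℂ).comp_left ≪≫ₗ
    LinearEquiv.ofEq _ _ (LinearMap.range_compLeft _ _)

theorem bijective_X_sub_C_smul (m : ℕ) (c : ℂ) :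
    Function.Bijective fun x : KM m => (X - C c) • x :=
  bijective_smul_of_algebraMap_ne_zero (F := RatFunc ℂ) <|
    RatFunc.algebraMap_ne_zero (X_sub_C_ne_zero c)

theorem isYChain_eq_isHeckeChain (m : ℕ) : IsYChain m = IsHeckeChain (polyL0 m) := by
  ext n k w L
  exact ⟨fun ⟨h0, hle, hfin, hdim, hsmul⟩ =>
      ⟨h0, fun i hi => ⟨hle i hi, hfin i hi, hdim i hi, hsmul i hi⟩⟩,
    fun ⟨h0, step⟩ => ⟨h0, fun i hi => (step i hi).le, fun i hi => (step i hi).finiteDimensional,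
      fun i hi => (step i hi).finrank_eq, fun i hi => (step i hi).le_smulComap⟩⟩

end StandardLattice

/-- description of the fibre of the forgetful map
`Y(k₁,…,k_n)_(w₁,…,w_n) → Y(k₁,…,k_{n-1})_(w₁,…,w_{n-1})`. -/
theorem statement1 (m : ℕ) (hm : 2 ≤ m) (n : ℕ) (hn : 1 ≤ n)
    (k : ℕ → ℕ) (w : ℕ → ℂ)
    (hk : ∀ j, 1 ≤ j → j ≤ n → 1 ≤ k j ∧ k j ≤ m - 1)
    (L : ℕ → SubM m)
    (hL : IsYChain m (n - 1) k w L)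
    (P : SubM m) (hP : P = (L (n - 1)).comap (zmul m (w n))) :
    -- (a) any ℂ-subspace between L_{n-1} and P is an R-submodule
    (∀ S : Submodule ℂ (KM m),
        (L (n - 1) : Set (KM m)) ⊆ (S : Set (KM m)) →
        (S : Set (KM m)) ⊆ (P : Set (KM m)) →
        ∀ (p : Polynomial ℂ), ∀ x ∈ S, p • x ∈ S) ∧
    -- (b) M completes the chain iff L_{n-1} ≤ M ≤ P and dim M/L_{n-1} = k_n
    (∀ M : SubM m,
        IsYChain m n k w (fun j => if j < n then L j else M) ↔
          (L (n - 1) ≤ M ∧ M ≤ P ∧ fdim m (L (n - 1)) M = k n)) ∧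
    -- P/L_{n-1} is an m-dimensional ℂ-vector space
    fdim m (L (n - 1)) P = m ∧
    -- (c) the fibre is in bijection with the k_n-dimensional subspaces of P/L_{n-1}
    (Function.Injective
        (fun M : {M : SubM m //
            IsYChain m n k w (fun j => if j < n then L j else M)} =>
          Submodule.restrictScalars ℂ
            (Submodule.map (Submodule.mkQ ((L (n - 1)).comap P.subtype))
              (M.1.comap P.subtype))) ∧
      ∀ V : Submodule ℂ (QuotMod m (L (n - 1)) P),
        (∃ M : {M : SubM m //
            IsYChain m n k w (fun j => if j < n then L j else M)},
          Submodule.restrictScalars ℂ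
            (Submodule.map (Submodule.mkQ ((L (n - 1)).comap P.subtype))
              (M.1.comap P.subtype)) = V) ↔
          Module.finrank ℂ V = k n) := by
  obtain ⟨n, rfl⟩ := Nat.exists_eq_add_of_le' hn
  rw [isYChain_eq_isHeckeChain] at hL ⊢
  exact hP ▸ statement1_general (fun i => bijective_X_sub_C_smul m (w i)) (polyL0Basis m) hL
end
end

section
/- Let (L₀ ⊆ L₁ ⊆ ⋯ ⊆ L_n) ∈ Y(k̲)_w̲ and let 1 ≤ i ≤ n−1 with w_i ≠ w_{i+1}. Let T be the ℂ-linear endomorphism of V := L_{i+1}/L_{i−1} induced by multiplication by z. Then ker(T − w_i·id) = L_i/L_{i−1}, the space V decomposes as V = ker(T − w_i·id) ⊕ ker(T − w_{i+1}·id), and dim_ℂ ker(T − w_{i+1}·id) = k_{i+1}. -/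
open Polynomial

set_option synthInstance.maxHeartbeats 1000000
set_option maxHeartbeats 1000000

noncomputable section

/-
Put `V = L_{i+1}/L_{i-1}` and `N = L_i/L_{i-1} ⊆ V`. Then `z - w_i` kills `N` and `z - w_{i+1}` maps
`V` into `N`. These two polynomials are comaximal because their difference is a nonzero constant, so
`V` is the direct sum of their torsion submodules, and the torsion of `z - w_i` is exactly `N`.
The complement is therefore isomorphic to `V/N = L_{i+1}/L_i`.
-/

section Coprime

variable {R V : Type*} [CommRing R] [AddCommGroup V] [Module R V] {p q : R}

theorem isCompl_torsionBy_of_isCoprime (hpq : IsCoprime p q)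
    (hV : Module.IsTorsionBy R V (p * q)) :
    IsCompl (Submodule.torsionBy R V p) (Submodule.torsionBy R V q) := by
  obtain ⟨u, v, huv⟩ := hpq
  have decomp (x : V) : (v * q) • x + (u * p) • x = x := by
    rw [← add_smul, add_comm, huv, one_smul]
  refine ⟨Submodule.disjoint_def.mpr fun x hp hq ↦ ?_, codisjoint_iff_le_sup.mpr fun x _ ↦ ?_⟩
  · rw [Submodule.mem_torsionBy_iff] at hp hq
    rw [← decomp x, mul_smul, mul_smul, hp, hq, smul_zero, smul_zero, add_zero]
  · refine Submodule.mem_sup.mpr ⟨(v * q) • x, ?_, (u * p) • x, ?_, decomp x⟩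
    · rw [Submodule.mem_torsionBy_iff, smul_smul, mul_left_comm, mul_smul, hV, smul_zero]
    · rw [Submodule.mem_torsionBy_iff, smul_smul, mul_left_comm, mul_comm q, mul_smul, hV,
        smul_zero]

theorem torsionBy_eq_of_isCoprime (hpq : IsCoprime p q) {N : Submodule R V}
    (hp : N ≤ Submodule.torsionBy R V p) (hq : ∀ x : V, q • x ∈ N) :
    Submodule.torsionBy R V p = N := by
  refine le_antisymm (fun x hx ↦ ?_) hp
  obtain ⟨u, v, huv⟩ := hpq
  have hx_eq : x = v • q • x := calc
    x = u • p • x + v • q • x := by rw [smul_smul, smul_smul, ← add_smul, huv, one_smul]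
    _ = v • q • x := by rw [(Submodule.mem_torsionBy_iff p x).mp hx, smul_zero, zero_add]
  rw [hx_eq]
  exact N.smul_mem v (hq x)

end Coprime

section Polynomial

variable {F : Type*} [CommRing F]

theorem ker_sub_smul_id_eq_torsionBy {V : Type*} [AddCommGroup V] [Module F V] [Module F[X] V]
    [IsScalarTower F F[X] V] {T : V →ₗ[F] V} (hT : ∀ v, T v = (X : F[X]) • v) (c : F) :
    LinearMap.ker (T - c • LinearMap.id) =
      (Submodule.torsionBy F[X] V (X - C c)).restrictScalars F := by
  ext v
  have hc : C c • v = c • v := algebraMap_smul F[X] c v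
  simp only [LinearMap.mem_ker, LinearMap.sub_apply, LinearMap.smul_apply, LinearMap.id_apply,
    Submodule.restrictScalars_mem, Submodule.mem_torsionBy_iff, sub_smul, hc, hT]

theorem statement2_general {E : Type*} [AddCommGroup E] [Module F E] [Module F[X] E]
    [IsScalarTower F F[X] E] {A B M : Submodule F[X] E} (hAB : A ≤ B) {a b : F}
    (hab : IsUnit (a - b)) (ha : ∀ x ∈ B, (X - C a) • x ∈ A) (hb : ∀ x ∈ M, (X - C b) • x ∈ B)
    {T : (M ⧸ A.comap M.subtype) →ₗ[F] (M ⧸ A.comap M.subtype)}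
    (hT : ∀ v, T v = (X : F[X]) • v) :
    LinearMap.ker (T - a • LinearMap.id) =
      ((B.comap M.subtype).map (A.comap M.subtype).mkQ).restrictScalars F ∧
    IsCompl (LinearMap.ker (T - a • LinearMap.id)) (LinearMap.ker (T - b • LinearMap.id)) ∧
    Nonempty (LinearMap.ker (T - b • LinearMap.id) ≃ₗ[F] M ⧸ B.comap M.subtype) := by
  set N := (B.comap M.subtype).map (A.comap M.subtype).mkQ
  have hpq : IsCoprime (X - C a) (X - C b) := isCoprime_X_sub_C_of_isUnit_sub hab
  have killed : N ≤ Submodule.torsionBy F[X] _ (X - C a) := by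
    rintro _ ⟨x, hx, rfl⟩
    exact (Submodule.Quotient.mk_eq_zero _).mpr (ha x hx)
  have absorbed : ∀ v : M ⧸ A.comap M.subtype, (X - C b) • v ∈ N := by
    rintro ⟨x⟩
    exact Submodule.mem_map_of_mem (hb x x.2)
  have torsion_eq : Submodule.torsionBy F[X] _ (X - C a) = N :=
    torsionBy_eq_of_isCoprime hpq killed absorbed
  have hcompl : IsCompl N (Submodule.torsionBy F[X] _ (X - C b)) :=
    torsion_eq ▸ isCompl_torsionBy_of_isCoprime hpq fun v ↦
      (mul_smul _ _ v).trans (killed (absorbed v))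
  let e := (Submodule.quotientEquivOfIsCompl _ _ hcompl).symm ≪≫ₗ
    Submodule.quotientQuotientEquivQuotient _ _ (Submodule.comap_mono hAB)
  rw [ker_sub_smul_id_eq_torsionBy hT, ker_sub_smul_id_eq_torsionBy hT, torsion_eq]
  exact ⟨rfl, (Submodule.isCompl_restrictScalars_iff F).mpr hcompl, ⟨e.restrictScalars F⟩⟩

end Polynomial

/-- eigenspace decomposition of `L_{i+1}/L_{i-1}` under the endomorphism
induced by multiplication by `z`, when `w_i ≠ w_{i+1}`. -/
theorem statement2 (m : ℕ) (hm : 2 ≤ m) (n : ℕ) (k : ℕ → ℕ) (w : ℕ → ℂ)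
    (hk : ∀ j, 1 ≤ j → j ≤ n → 1 ≤ k j ∧ k j ≤ m - 1)
    (L : ℕ → SubM m) (hL : IsYChain m n k w L)
    (i : ℕ) (hi : 1 ≤ i) (hin : i + 1 ≤ n) (hw : w i ≠ w (i + 1))
    (T : QuotMod m (L (i - 1)) (L (i + 1)) →ₗ[ℂ] QuotMod m (L (i - 1)) (L (i + 1)))
    (hT : T = quotSmul m Polynomial.X (L (i - 1)) (L (i + 1))) :
    -- ker(T - w_i) = L_i/L_{i-1}
    LinearMap.ker (T - w i • LinearMap.id) =
      Submodule.restrictScalars ℂ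
        (Submodule.map (Submodule.mkQ ((L (i - 1)).comap (L (i + 1)).subtype))
          ((L i).comap (L (i + 1)).subtype)) ∧
    -- V = ker(T - w_i) ⊕ ker(T - w_{i+1})
    IsCompl (LinearMap.ker (T - w i • LinearMap.id))
      (LinearMap.ker (T - w (i + 1) • LinearMap.id)) ∧
    -- dim ker(T - w_{i+1}) = k_{i+1}
    Module.finrank ℂ ↥(LinearMap.ker (T - w (i + 1) • LinearMap.id)) = k (i + 1) := by
  obtain ⟨j, rfl⟩ := Nat.exists_eq_add_of_le' hi
  obtain ⟨-, hle, -, hdim, hz⟩ := hL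
  obtain ⟨hker, hcompl, ⟨e⟩⟩ := statement2_general (hle j (by omega)) (sub_ne_zero.mpr hw).isUnit
    (hz j (by omega)) (hz (j + 1) (by omega)) (T := T) fun _ ↦ hT ▸ rfl
  exact ⟨hker, hcompl, e.finrank_eq.trans (hdim (j + 1) (by omega))⟩
end
end

section
/- Let (L₀ ⊆ L₁ ⊆ ⋯ ⊆ L_n) ∈ Y(k̲)_w̲ and let 1 ≤ i ≤ n−1 with w_i ≠ w_{i+1}. Then M := {x ∈ L_{i+1} : (z − w_{i+1})·x ∈ L_{i−1}} is the unique R-submodule of K^m satisfying: L_{i−1} ⊆ M ⊆ L_{i+1}, dim_ℂ(M/L_{i−1}) = k_{i+1}, (z − w_{i+1})·M ⊆ L_{i−1}, and (z − w_i)·L_{i+1} ⊆ M. In particular, the chain obtained from (L_•) by replacing L_i with M is a point of Y(s_i·k̲)_{s_i·w̲}. -/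
open Polynomial

set_option synthInstance.maxHeartbeats 1000000
set_option maxHeartbeats 1000000

noncomputable section

/-- `s_i` : exchanging the `i`-th and `(i+1)`-st entries of a sequence. -/
def swapAt {α : Type*} (i : ℕ) (f : ℕ → α) : ℕ → α :=
  fun j => if j = i then f (i + 1) else if j = i + 1 then f i else f j

/-!
Write `A ≤ B ≤ C` for three consecutive terms of the chain, with `p • B ≤ A` and `q • C ≤ B` for
coprime `p` and `q`. The quotient `C / A` is killed by `p * q`, so it is the direct sum of its
`p`-torsion and its `q`-torsion. The `p`-torsion is `B / A`, and the `q`-torsion is `M / A`.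
Hence `M ⊓ B = A` and `M ⊔ B = C`, and the second isomorphism theorem gives `M / A ≃ C / B` and
`B / A ≃ C / M`, which is the exchange of the two steps.
-/

variable {S R V : Type*} [Semiring S] [CommRing R] [AddCommGroup V] [Module R V]
  [SMul S R] [Module S V] [IsScalarTower S R V]

theorem mem_of_isCoprime_smul_mem {N : Submodule R V} {p q : R} (hpq : IsCoprime p q) {x : V}
    (hp : p • x ∈ N) (hq : q • x ∈ N) : x ∈ N := by
  obtain ⟨u, v, huv⟩ := hpq
  have hx : u • p • x + v • q • x = x := by
    rw [smul_smul, smul_smul, ← add_smul, huv, one_smul]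
  exact hx ▸ N.add_mem (N.smul_mem u hp) (N.smul_mem v hq)

/-- The submodule `{x ∈ C | q • x ∈ A}`, that is, the `q`-torsion of `C / A` pulled back to `C`
when `A ≤ C`. -/
def relTorsionBy (q : R) (A C : Submodule R V) : Submodule R V :=
  C ⊓ A.comap (q • LinearMap.id)

section Coprime

variable {p q : R} {A C : Submodule R V}

theorem relTorsionBy_inf_relTorsionBy (hpq : IsCoprime p q) (hAC : A ≤ C) :
    relTorsionBy q A C ⊓ relTorsionBy p A C = A := by
  refine le_antisymm (fun x hx => ?_) fun x hx => ?_
  · exact mem_of_isCoprime_smul_mem hpq hx.2.2 hx.1.2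
  · exact ⟨⟨hAC hx, A.smul_mem q hx⟩, hAC hx, A.smul_mem p hx⟩

theorem relTorsionBy_sup_relTorsionBy (hpq : IsCoprime p q) (hC : ∀ x ∈ C, p • q • x ∈ A) :
    relTorsionBy q A C ⊔ relTorsionBy p A C = C := by
  refine le_antisymm (sup_le inf_le_left inf_le_left) fun x hx => ?_
  have hpx : p • x ∈ relTorsionBy q A C :=
    ⟨C.smul_mem p hx, show q • p • x ∈ A from smul_comm q p x ▸ hC x hx⟩
  have hqx : q • x ∈ relTorsionBy p A C := ⟨C.smul_mem q hx, hC x hx⟩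
  exact mem_of_isCoprime_smul_mem hpq (Submodule.mem_sup_left hpx) (Submodule.mem_sup_right hqx)

theorem eq_relTorsionBy {N : Submodule R V} (hpq : IsCoprime p q) (hAN : A ≤ N) (hNC : N ≤ C)
    (hN : ∀ x ∈ N, q • x ∈ A) (hC : ∀ x ∈ C, p • x ∈ N) : N = relTorsionBy q A C :=
  le_antisymm (fun x hx => ⟨hNC hx, hN x hx⟩) fun x hx =>
    mem_of_isCoprime_smul_mem hpq (hC x hx.1) (hAN hx.2)

end Coprime

variable (S) in
/-- One step of a chain in `Y(k)_w`: `A ≤ B` with `B / A` finite of rank `k` over the scalars `S`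
and killed by `p`, which stands for `z - w`. -/
structure IsModification (k : ℕ) (p : R) (A B : Submodule R V) : Prop where
  le : A ≤ B
  finite : Module.Finite S (B ⧸ A.comap B.subtype)
  finrank_eq : Module.finrank S (B ⧸ A.comap B.subtype) = k
  smul_mem : ∀ x ∈ B, p • x ∈ A

variable (S) in
/-- The analogue of `Y(k)_w` in an arbitrary module: chains of `n` modifications starting at
`L₀`, with `p i` in place of `z - w_i`. As in `IsYChain`, the entries of `k` and `p` count from
`1`. -/
def IsModificationChain (L₀ : Submodule R V) (n : ℕ) (k : ℕ → ℕ) (p : ℕ → R)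
    (L : ℕ → Submodule R V) : Prop :=
  L 0 = L₀ ∧ ∀ i < n, IsModification S (k (i + 1)) (p (i + 1)) (L i) (L (i + 1))

namespace IsModification

variable {k k₁ k₂ : ℕ} {p q : R} {A A' B B' C : Submodule R V}

theorem smul_quotient_eq_zero (h : IsModification S k p A B) (y : B ⧸ A.comap B.subtype) :
    p • y = 0 := by
  obtain ⟨x, rfl⟩ := Submodule.Quotient.mk_surjective _ y
  exact (Submodule.Quotient.mk_eq_zero _).2 (h.smul_mem x x.2)

theorem of_quotient_equiv (h : IsModification S k p A B) (hle : A' ≤ B')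
    (e : (B ⧸ A.comap B.subtype) ≃ₗ[R] (B' ⧸ A'.comap B'.subtype)) :
    IsModification S k p A' B' where
  le := hle
  finite := have := h.finite; .equiv (e.restrictScalars S)
  finrank_eq := (e.restrictScalars S).finrank_eq.symm.trans h.finrank_eq
  smul_mem x hx := by
    have hzero : p • (Submodule.Quotient.mk ⟨x, hx⟩ : B' ⧸ A'.comap B'.subtype) = 0 := by
      rw [← e.apply_symm_apply (Submodule.Quotient.mk _), ← map_smul, h.smul_quotient_eq_zero,
        map_zero]
    exact (Submodule.Quotient.mk_eq_zero (A'.comap B'.subtype)).1 hzero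

theorem inf_left_iff_sup_right :
    IsModification S k p (A ⊓ B) A ↔ IsModification S k p B (A ⊔ B) :=
  ⟨fun h => h.of_quotient_equiv le_sup_right (LinearMap.quotientInfEquivSupQuotient A B),
    fun h => h.of_quotient_equiv inf_le_left (LinearMap.quotientInfEquivSupQuotient A B).symm⟩

theorem exchange (hpq : IsCoprime p q) (hAB : IsModification S k₁ p A B)
    (hBC : IsModification S k₂ q B C) :
    IsModification S k₂ q A (relTorsionBy q A C) ∧
      IsModification S k₁ p (relTorsionBy q A C) C := by
  have hB : B = relTorsionBy p A C :=
    eq_relTorsionBy hpq.symm hAB.le hBC.le hAB.smul_mem hBC.smul_mem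
  have hinf : relTorsionBy q A C ⊓ B = A :=
    hB ▸ relTorsionBy_inf_relTorsionBy hpq (hAB.le.trans hBC.le)
  have hsup : relTorsionBy q A C ⊔ B = C :=
    hB ▸ relTorsionBy_sup_relTorsionBy hpq fun x hx => hAB.smul_mem _ (hBC.smul_mem x hx)
  constructor
  · have h := inf_left_iff_sup_right.2 (hsup.symm ▸ hBC)
    rwa [hinf] at h
  · have h := inf_left_iff_sup_right.1 (inf_comm B _ ▸ hinf.symm ▸ hAB)
    rwa [sup_comm, hsup] at h

end IsModification

theorem IsModificationChain.update {L₀ : Submodule R V} {n i : ℕ} {k : ℕ → ℕ} {p : ℕ → R}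
    {L : ℕ → Submodule R V} {M : Submodule R V} (hL : IsModificationChain S L₀ n k p L)
    (hlower : IsModification S (k (i + 2)) (p (i + 2)) (L i) M)
    (hupper : IsModification S (k (i + 1)) (p (i + 1)) M (L (i + 2))) :
    IsModificationChain S L₀ n (swapAt (i + 1) k) (swapAt (i + 1) p)
      (Function.update L (i + 1) M) := by
  refine ⟨by simpa using hL.1, fun j hj => ?_⟩
  obtain rfl | hji := eq_or_ne j i
  · simpa [swapAt] using hlower
  obtain rfl | hji' := eq_or_ne j (i + 1)
  · simpa [swapAt] using hupper
  · simpa [swapAt, hji, hji'] using hL.2 j hj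

theorem statement3_general {L₀ : Submodule R V} {n i : ℕ} {k : ℕ → ℕ} {p : ℕ → R}
    {L : ℕ → Submodule R V} (hL : IsModificationChain S L₀ n k p L) (hin : i + 2 ≤ n)
    (hp : IsCoprime (p (i + 1)) (p (i + 2))) {M : Submodule R V}
    (hM : M = relTorsionBy (p (i + 2)) (L i) (L (i + 2))) :
    (IsModification S (k (i + 2)) (p (i + 2)) (L i) M ∧
      IsModification S (k (i + 1)) (p (i + 1)) M (L (i + 2))) ∧
    (∀ M' : Submodule R V, L i ≤ M' → M' ≤ L (i + 2) → (∀ x ∈ M', p (i + 2) • x ∈ L i) →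
      (∀ x ∈ L (i + 2), p (i + 1) • x ∈ M') → M' = M) ∧
    IsModificationChain S L₀ n (swapAt (i + 1) k) (swapAt (i + 1) p)
      (Function.update L (i + 1) M) := by
  subst hM
  have hex := IsModification.exchange hp (hL.2 i (by lia)) (hL.2 (i + 1) (by lia))
  exact ⟨hex, fun _ => eq_relTorsionBy hp, hL.update hex.1 hex.2⟩

theorem comp_swapAt {α β : Type*} (f : α → β) (i : ℕ) (a : ℕ → α) :
    (fun j => f (swapAt i a j)) = swapAt i fun j => f (a j) := by
  funext j
  simp only [swapAt, apply_ite f]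

theorem isYChain_iff_isModificationChain {m n : ℕ} {k : ℕ → ℕ} {w : ℕ → ℂ} {L : ℕ → SubM m} :
    IsYChain m n k w L ↔ IsModificationChain ℂ (polyL0 m) n k (fun i => X - C (w i)) L := by
  constructor
  · rintro ⟨hzero, hle, hfinite, hfdim, hzmul⟩
    exact ⟨hzero, fun i hi => ⟨hle i hi, hfinite i hi, hfdim i hi, hzmul i hi⟩⟩
  · rintro ⟨hzero, hstep⟩
    exact ⟨hzero, fun i hi => (hstep i hi).le, fun i hi => (hstep i hi).finite,
      fun i hi => (hstep i hi).finrank_eq, fun i hi => (hstep i hi).smul_mem⟩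

/-- when `w_i ≠ w_{i+1}`, `M = {x ∈ L_{i+1} : (z-w_{i+1})x ∈ L_{i-1}}` is the
unique `R`-submodule fitting between `L_{i-1}` and `L_{i+1}` with the stated properties,
and replacing `L_i` by `M` gives a point of `Y(s_i·k)_{s_i·w}`. -/
theorem statement3 (m : ℕ) (hm : 2 ≤ m) (n : ℕ) (k : ℕ → ℕ) (w : ℕ → ℂ)
    (hk : ∀ j, 1 ≤ j → j ≤ n → 1 ≤ k j ∧ k j ≤ m - 1)
    (L : ℕ → SubM m) (hL : IsYChain m n k w L)
    (i : ℕ) (hi : 1 ≤ i) (hin : i + 1 ≤ n) (hw : w i ≠ w (i + 1))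
    (M : SubM m)
    (hM : M = L (i + 1) ⊓ (L (i - 1)).comap (zmul m (w (i + 1)))) :
    -- M satisfies the four conditions
    (L (i - 1) ≤ M ∧ M ≤ L (i + 1) ∧
      fdim m (L (i - 1)) M = k (i + 1) ∧
      (∀ x ∈ M, zmul m (w (i + 1)) x ∈ L (i - 1)) ∧
      (∀ x ∈ L (i + 1), zmul m (w i) x ∈ M)) ∧
    -- M is the unique such R-submodule
    (∀ M' : SubM m,
        L (i - 1) ≤ M' → M' ≤ L (i + 1) →
        fdim m (L (i - 1)) M' = k (i + 1) →
        (∀ x ∈ M', zmul m (w (i + 1)) x ∈ L (i - 1)) →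
        (∀ x ∈ L (i + 1), zmul m (w i) x ∈ M') → M' = M) ∧
    -- replacing L_i by M gives a point of Y(s_i·k)_{s_i·w}
    IsYChain m n (swapAt i k) (swapAt i w) (fun j => if j = i then M else L j) := by
  obtain ⟨i, rfl⟩ := Nat.exists_eq_add_of_le' hi
  obtain ⟨⟨hlower, hupper⟩, hunique, hchain⟩ := statement3_general
    (isYChain_iff_isModificationChain.1 hL) hin (isCoprime_X_sub_C_of_isUnit_sub
      (sub_ne_zero.2 hw).isUnit) hM
  refine ⟨⟨hlower.le, hupper.le, hlower.finrank_eq, hlower.smul_mem, hupper.smul_mem⟩,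
    fun M' hle hge _ => hunique M' hle hge, ?_⟩
  rw [isYChain_iff_isModificationChain, comp_swapAt fun a => X - C a]
  simpa only [← Function.update_apply] using hchain
end
end

section
/- Suppose 1 ≤ i ≤ n−1 and w_i ≠ w_{i+1}. If ((L_•),(L'_•)) ∈ Z(k̲)^i_w̲ and ((L'_•),(L''_•)) ∈ Z(s_i·k̲)^i_{s_i·w̲}, then L''_i = L_i; hence the set-theoretic composition of the correspondence Z(s_i·k̲)^i_{s_i·w̲} with the correspondence Z(k̲)^i_w̲ is the diagonal of Y(k̲)_w̲. -/
/-!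
Let `L_{i-1} ⊆ L_i ⊆ L_{i+1}` with `r L_i ⊆ L_{i-1}` and `s L_{i+1} ⊆ L_i`, where `r` and `s` are
coprime. Then a vector is in a submodule as soon as both of its multiples by `r` and by `s` are, so
`L_i` has to consist of all `x ∈ L_{i+1}` with `r x ∈ L_{i-1}`: it is determined by its neighbours.
This gives uniqueness. For existence, let `L'_i` consist of all `x ∈ L_{i+1}` with `s x ∈ L_{i-1}`.
Then `L_i ∩ L'_i = L_{i-1}` and `L_i + L'_i = L_{i+1}`, and the second isomorphism theorem carries
each of the two steps below and above `L_i` to the opposite side of the diamond.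
-/

open Polynomial

set_option synthInstance.maxHeartbeats 1000000
set_option maxHeartbeats 1000000

noncomputable section

/-- The correspondence `Z(k)^i_w ⊆ Y(k)_w × Y(s_i·k)_{s_i·w}`. -/
def IsZPair (m n i : ℕ) (k : ℕ → ℕ) (w : ℕ → ℂ) (L L' : ℕ → SubM m) : Prop :=
  IsYChain m n k w L ∧ IsYChain m n (swapAt i k) (swapAt i w) L' ∧
  ∀ j, j ≠ i → L j = L' j

theorem swapAt_swapAt {α : Type*} (i : ℕ) (f : ℕ → α) : swapAt i (swapAt i f) = f := by
  funext j
  grind [swapAt]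

theorem swapAt_comp {α β : Type*} (f : α → β) (i : ℕ) (w : ℕ → α) :
    swapAt i (fun j => f (w j)) = fun j => f (swapAt i w j) := by
  funext j
  grind [swapAt]

section Modification

variable {R V : Type*} [CommRing R] [AddCommGroup V] [Module R V]

theorem mem_of_isCoprime_of_smul_mem {r s : R} (hrs : IsCoprime r s) {A : Submodule R V} {x : V}
    (hr : r • x ∈ A) (hs : s • x ∈ A) : x ∈ A := by
  obtain ⟨a, b, hab⟩ := hrs
  have hx : x = a • r • x + b • s • x := by
    rw [smul_smul, smul_smul, ← add_smul, hab, one_smul]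
  rw [hx]
  exact A.add_mem (A.smul_mem a hr) (A.smul_mem b hs)

/-- The elements of `B` that `r` multiplies into `A`; for `A ≤ B` this is the preimage in `B` of
the `r`-torsion of `B / A`. -/
def torsionPreimage (r : R) (A B : Submodule R V) : Submodule R V :=
  B ⊓ A.comap (LinearMap.lsmul R V r)

theorem mem_torsionPreimage {r : R} {A B : Submodule R V} {x : V} :
    x ∈ torsionPreimage r A B ↔ x ∈ B ∧ r • x ∈ A :=
  Iff.rfl

section Coprime

variable {r s : R} {A M B : Submodule R V}

theorem eq_torsionPreimage (hrs : IsCoprime r s) (hAM : A ≤ M) (hMB : M ≤ B)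
    (hr : ∀ x ∈ M, r • x ∈ A) (hs : ∀ x ∈ B, s • x ∈ M) : M = torsionPreimage r A B := by
  ext x
  rw [mem_torsionPreimage]
  exact ⟨fun hx => ⟨hMB hx, hr x hx⟩,
    fun hx => mem_of_isCoprime_of_smul_mem hrs (hAM hx.2) (hs x hx.1)⟩

theorem inf_torsionPreimage (hrs : IsCoprime r s) (hAM : A ≤ M) (hMB : M ≤ B)
    (hr : ∀ x ∈ M, r • x ∈ A) : M ⊓ torsionPreimage s A B = A := by
  refine le_antisymm (fun x hx => ?_)
    (le_inf hAM fun x hx => ⟨hMB (hAM hx), A.smul_mem s hx⟩)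
  exact mem_of_isCoprime_of_smul_mem hrs (hr x hx.1) (mem_torsionPreimage.1 hx.2).2

theorem sup_torsionPreimage (hrs : IsCoprime r s) (hMB : M ≤ B)
    (hr : ∀ x ∈ M, r • x ∈ A) (hs : ∀ x ∈ B, s • x ∈ M) : M ⊔ torsionPreimage s A B = B := by
  refine le_antisymm (sup_le hMB inf_le_left) fun x hx => ?_
  have hrx : r • x ∈ torsionPreimage s A B :=
    ⟨B.smul_mem r hx, show s • r • x ∈ A from smul_comm r s x ▸ hr _ (hs x hx)⟩
  exact mem_of_isCoprime_of_smul_mem hrs (Submodule.mem_sup_right hrx)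
    (Submodule.mem_sup_left (hs x hx))

end Coprime

variable (F : Type*) [Field F] [Algebra F R] [Module F V] [IsScalarTower F R V]

/-- One step of a chain: `A ≤ B` has a `d`-dimensional quotient which is annihilated by `r`. -/
structure IsModification_s5 (r : R) (d : ℕ) (A B : Submodule R V) : Prop where
  le : A ≤ B
  finiteDimensional : FiniteDimensional F (B ⧸ A.submoduleOf B)
  finrank_eq : Module.finrank F (B ⧸ A.submoduleOf B) = d
  smul_mem : ∀ x ∈ B, r • x ∈ A

/-- A chain `L 0 ≤ ⋯ ≤ L n` starting at `L₀` whose `j`-th step, from `L (j - 1)` to `L j`, has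
dimension `k j` and is annihilated by `r j`. The terms `L j` with `j > n` are arbitrary. -/
structure IsModificationChain_s5 (L₀ : Submodule R V) (n : ℕ) (k : ℕ → ℕ) (r : ℕ → R)
    (L : ℕ → Submodule R V) : Prop where
  zero_eq : L 0 = L₀
  isModification : ∀ j < n, IsModification_s5 F (r (j + 1)) (k (j + 1)) (L j) (L (j + 1))

/-- The correspondence between chains of type `(k, r)` and chains of the type obtained by
exchanging the `i`-th and `(i + 1)`-st steps: the chains agree except possibly at `i`. -/
structure IsSwapPair (L₀ : Submodule R V) (n i : ℕ) (k : ℕ → ℕ) (r : ℕ → R)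
    (L L' : ℕ → Submodule R V) : Prop where
  left : IsModificationChain_s5 F L₀ n k r L
  right : IsModificationChain_s5 F L₀ n (swapAt i k) (swapAt i r) L'
  eq_of_ne : ∀ j, j ≠ i → L j = L' j

variable {F}

theorem isModification_inf_iff_sup {r : R} {d : ℕ} {P Q : Submodule R V} :
    IsModification_s5 F r d (P ⊓ Q) P ↔ IsModification_s5 F r d Q (P ⊔ Q) := by
  let e : (P ⧸ (P ⊓ Q).submoduleOf P) ≃ₗ[F] (↥(P ⊔ Q) ⧸ Q.submoduleOf (P ⊔ Q)) :=
    (LinearMap.quotientInfEquivSupQuotient P Q).restrictScalars F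
  constructor
  · rintro ⟨-, hfin, hd, hr⟩
    refine ⟨le_sup_right, e.finiteDimensional, e.finrank_eq.symm.trans hd, fun x hx => ?_⟩
    obtain ⟨p, hp, q, hq, rfl⟩ := Submodule.mem_sup.1 hx
    rw [smul_add]
    exact Q.add_mem (hr p hp).2 (Q.smul_mem r hq)
  · rintro ⟨-, hfin, hd, hr⟩
    exact ⟨inf_le_left, e.symm.finiteDimensional, e.finrank_eq.trans hd,
      fun x hx => ⟨P.smul_mem r hx, hr x (Submodule.mem_sup_left hx)⟩⟩

theorem IsModification_s5.exists_swap {r s : R} (hrs : IsCoprime r s) {d e : ℕ}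
    {A M B : Submodule R V} (hAM : IsModification_s5 F r d A M) (hMB : IsModification_s5 F s e M B) :
    ∃ N, IsModification_s5 F s e A N ∧ IsModification_s5 F r d N B := by
  have hinf := inf_torsionPreimage hrs hAM.le hMB.le hAM.smul_mem
  have hsup := sup_torsionPreimage hrs hMB.le hAM.smul_mem hMB.smul_mem
  refine ⟨torsionPreimage s A B, ?_, ?_⟩
  · rw [← hsup, sup_comm] at hMB
    simpa only [inf_comm, hinf] using isModification_inf_iff_sup.2 hMB
  · rw [← hinf] at hAM
    simpa only [hsup] using isModification_inf_iff_sup.1 hAM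

variable {L₀ : Submodule R V} {n i : ℕ} {k : ℕ → ℕ} {r : ℕ → R} {L L' L'' : ℕ → Submodule R V}

theorem IsModificationChain_s5.apply_eq_torsionPreimage (hL : IsModificationChain_s5 F L₀ n k r L)
    (hi : 1 ≤ i) (hin : i + 1 ≤ n) (hcop : IsCoprime (r i) (r (i + 1))) :
    L i = torsionPreimage (r i) (L (i - 1)) (L (i + 1)) := by
  obtain ⟨j, rfl⟩ := Nat.exists_eq_add_of_le' hi
  have below := hL.isModification j (by omega)
  have above := hL.isModification (j + 1) hin
  exact eq_torsionPreimage hcop below.le above.le below.smul_mem above.smul_mem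

theorem IsModificationChain_s5.update_swapAt {j : ℕ} (hL : IsModificationChain_s5 F L₀ n k r L)
    {N : Submodule R V} (below : IsModification_s5 F (r (j + 2)) (k (j + 2)) (L j) N)
    (above : IsModification_s5 F (r (j + 1)) (k (j + 1)) N (L (j + 2))) :
    IsModificationChain_s5 F L₀ n (swapAt (j + 1) k) (swapAt (j + 1) r)
      (Function.update L (j + 1) N) where
  zero_eq := by simpa using hL.zero_eq
  isModification l hl := by
    rcases eq_or_ne l j with rfl | hlj
    · simpa [swapAt] using below
    rcases eq_or_ne l (j + 1) with rfl | hlj'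
    · simpa [swapAt] using above
    · simpa [swapAt, hlj, hlj'] using hL.isModification l hl

theorem IsModificationChain_s5.exists_isSwapPair (hL : IsModificationChain_s5 F L₀ n k r L)
    (hi : 1 ≤ i) (hin : i + 1 ≤ n) (hcop : IsCoprime (r i) (r (i + 1))) :
    ∃ L', IsSwapPair F L₀ n i k r L L' := by
  obtain ⟨j, rfl⟩ := Nat.exists_eq_add_of_le' hi
  obtain ⟨N, below, above⟩ :=
    (hL.isModification j (by omega)).exists_swap hcop (hL.isModification (j + 1) hin)
  exact ⟨Function.update L (j + 1) N, hL, hL.update_swapAt below above,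
    fun l hl => (Function.update_of_ne hl N L).symm⟩

theorem IsSwapPair.symm (h : IsSwapPair F L₀ n i k r L L') :
    IsSwapPair F L₀ n i (swapAt i k) (swapAt i r) L' L where
  left := h.right
  right := by simpa only [swapAt_swapAt] using h.left
  eq_of_ne j hj := (h.eq_of_ne j hj).symm

theorem IsSwapPair.eq_of_comp (h : IsSwapPair F L₀ n i k r L L')
    (h' : IsSwapPair F L₀ n i (swapAt i k) (swapAt i r) L' L'')
    (hi : 1 ≤ i) (hin : i + 1 ≤ n) (hcop : IsCoprime (r i) (r (i + 1))) : L'' = L := by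
  have hL'' : IsModificationChain_s5 F L₀ n k r L'' := by
    simpa only [swapAt_swapAt] using h'.right
  have hne : ∀ j, j ≠ i → L'' j = L j := fun j hj =>
    ((h.eq_of_ne j hj).trans (h'.eq_of_ne j hj)).symm
  funext j
  rcases eq_or_ne j i with rfl | hj
  · rw [hL''.apply_eq_torsionPreimage hi hin hcop, h.left.apply_eq_torsionPreimage hi hin hcop,
      hne (j - 1) (by omega), hne (j + 1) (by omega)]
  · exact hne j hj

theorem statement5_general (hi : 1 ≤ i) (hin : i + 1 ≤ n) (hcop : IsCoprime (r i) (r (i + 1))) :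
    Relation.Comp (IsSwapPair F L₀ n i k r) (IsSwapPair F L₀ n i (swapAt i k) (swapAt i r)) L L'' ↔
      IsModificationChain_s5 F L₀ n k r L ∧ L'' = L := by
  constructor
  · rintro ⟨L', h, h'⟩
    exact ⟨h.left, h.eq_of_comp h' hi hin hcop⟩
  · rintro ⟨hL, rfl⟩
    obtain ⟨L', h⟩ := hL.exists_isSwapPair hi hin hcop
    exact ⟨L', h, h.symm⟩

end Modification

section LatticeChain

variable {m n i : ℕ} {k : ℕ → ℕ} {w : ℕ → ℂ} {L L' L'' : ℕ → SubM m}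

theorem isYChain_iff :
    IsYChain m n k w L ↔
      IsModificationChain_s5 ℂ (polyL0 m) n k (fun j => (X - C (w j) : ℂ[X])) L :=
  ⟨fun ⟨h0, hle, hfin, hdim, hmul⟩ =>
    ⟨h0, fun j hj => ⟨hle j hj, hfin j hj, hdim j hj, hmul j hj⟩⟩,
  fun ⟨h0, h⟩ => ⟨h0, fun j hj => (h j hj).le, fun j hj => (h j hj).finiteDimensional,
    fun j hj => (h j hj).finrank_eq, fun j hj => (h j hj).smul_mem⟩⟩

theorem isZPair_iff :
    IsZPair m n i k w L L' ↔
      IsSwapPair ℂ (polyL0 m) n i k (fun j => (X - C (w j) : ℂ[X])) L L' := by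
  simp only [IsZPair, isYChain_iff, ← swapAt_comp fun a : ℂ => (X - C a : ℂ[X])]
  exact ⟨fun ⟨h, h', hne⟩ => ⟨h, h', hne⟩, fun ⟨h, h', hne⟩ => ⟨h, h', hne⟩⟩

theorem comp_isZPair_iff (hi : 1 ≤ i) (hin : i + 1 ≤ n) (hw : w i ≠ w (i + 1)) :
    Relation.Comp (IsZPair m n i k w) (IsZPair m n i (swapAt i k) (swapAt i w)) L L'' ↔
      IsYChain m n k w L ∧ L'' = L := by
  have hcop : IsCoprime (X - C (w i)) (X - C (w (i + 1))) :=
    isCoprime_X_sub_C_of_isUnit_sub (sub_ne_zero.2 hw).isUnit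
  simpa only [Relation.Comp, isZPair_iff, isYChain_iff,
    swapAt_comp fun a : ℂ => (X - C a : ℂ[X])] using
    statement5_general (F := ℂ) (r := fun j => X - C (w j)) hi hin hcop

end LatticeChain

/-- for `w_i ≠ w_{i+1}`, composing the correspondence `Z(s_i·k)^i_{s_i·w}`
with `Z(k)^i_w` gives back the original chain (`L''_i = L_i`); hence the set-theoretic
composition of the two correspondences is the diagonal of `Y(k)_w`. -/
theorem statement5 (m : ℕ) (hm : 2 ≤ m) (n : ℕ) (k : ℕ → ℕ) (w : ℕ → ℂ)
    (hk : ∀ j, 1 ≤ j → j ≤ n → 1 ≤ k j ∧ k j ≤ m - 1)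
    (i : ℕ) (hi : 1 ≤ i) (hin : i + 1 ≤ n) (hw : w i ≠ w (i + 1))
    (L L' L'' : ℕ → SubM m)
    (hZ1 : IsZPair m n i k w L L')
    (hZ2 : IsZPair m n i (swapAt i k) (swapAt i w) L' L'') :
    L'' i = L i ∧ L'' = L ∧
    {p : (ℕ → SubM m) × (ℕ → SubM m) |
        ∃ Lmid : ℕ → SubM m, IsZPair m n i k w p.1 Lmid ∧
          IsZPair m n i (swapAt i k) (swapAt i w) Lmid p.2} =
      {p : (ℕ → SubM m) × (ℕ → SubM m) | IsYChain m n k w p.1 ∧ p.2 = p.1} := by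
  have hL : L'' = L := ((comp_isZPair_iff hi hin hw).1 ⟨L', hZ1, hZ2⟩).2
  exact ⟨congrFun hL i, hL, Set.ext fun _ => comp_isZPair_iff hi hin hw⟩
end
end

section
/- Assume 1 ≤ i ≤ n−1, k_i + k_{i+1} = m and w_i = w_{i+1}. Then the map q: X(k̲)^i_w̲ → Y(d_i·k̲)_{d_i·w̲} sending (L₁,…,L_n) to (L₁,…,L_{i−1}, (z−w_i)·L_{i+2}, …, (z−w_i)·L_n) is well-defined and surjective. Moreover, for each point (M₁,…,M_{n−2}) of Y(d_i·k̲)_{d_i·w̲}, setting L_{i+1} := {x ∈ K^m : (z−w_i)·x ∈ M_{i−1}} (an R-submodule with dim_ℂ(L_{i+1}/M_{i−1}) = m), the fibre of q over this point is in bijection, via (L_•) ↦ L_i/L_{i−1}, with the set of k_i-dimensional ℂ-subspaces of the m-dimensional space L_{i+1}/M_{i−1}. -/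
open Polynomial

set_option synthInstance.maxHeartbeats 1000000
set_option maxHeartbeats 1000000

noncomputable section

/-- `d_i` : deleting the `i`-th and `(i+1)`-st entries of a sequence. -/
def dropAt {α : Type*} (i : ℕ) (f : ℕ → α) : ℕ → α :=
  fun j => if j < i then f j else f (j + 2)

/-- The chain `q(L) = (L₁,…,L_{i-1},(z-w_i)·L_{i+2},…,(z-w_i)·L_n)`. -/
def qChain (m i : ℕ) (w : ℕ → ℂ) (L : ℕ → SubM m) : ℕ → SubM m :=
  fun j => if j < i then L j else (L (j + 2)).map (zmul m (w i))

/-- Membership of a chain `L` in the fibre of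
`q : X(k)^i_w → Y(d_i·k)_{d_i·w}` over the chain `Mc`. -/
def InFibre (m n i : ℕ) (k : ℕ → ℕ) (w : ℕ → ℂ) (Mc L : ℕ → SubM m) : Prop :=
  IsYChain m n k w L ∧
  (L (i + 1)).map (zmul m (w i)) = L (i - 1) ∧
  ∀ j ≤ n - 2, qChain m i w L j = Mc j

/-- The subspace `L_i/L_{i-1}` of `P/M_{i-1}`. -/
def fibreImg (m i : ℕ) (Mc : ℕ → SubM m) (P : SubM m) (L : ℕ → SubM m) :
    Submodule ℂ (QuotMod m (Mc (i - 1)) P) :=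
  Submodule.restrictScalars ℂ
    (Submodule.map (Submodule.mkQ ((Mc (i - 1)).comap P.subtype))
      ((L i).comap P.subtype))

/-!
Write `a = w_i = w_{i+1}`. Multiplication by `z - a` is an automorphism of `K^m`, so it preserves
relative dimensions of lattices; hence `dim (z-a)⁻¹A / A` does not change when `A` is enlarged by a
finite-dimensional step, and it equals `m` along every chain because it does for `A = L₀`.

Over a point `M` the fibre condition forces `L_{i+1} = (z-a)⁻¹M_{i-1}`, `L_j = M_j` for `j < i` and
`L_j = (z-a)⁻¹M_{j-2}` for `j > i`, so only `L_i` is free. As `z - a` kills `L_{i+1}/M_{i-1}`, each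
of its complex subspaces is a submodule, and those of dimension `k_i` are exactly the possible
`L_i/M_{i-1}`.
-/

section Subquotients

variable {R V : Type*} [Ring R] [AddCommGroup V] [Module R V] {A B C : Submodule R V}

/-- The image of `B` in `C / (A ∩ C)`, that is `B / A` when `A ≤ B ≤ C`. -/
def quotImage (A B C : Submodule R V) : Submodule R (C ⧸ A.comap C.subtype) :=
  (B.comap C.subtype).map (A.comap C.subtype).mkQ

theorem quotImage_injOn (A C : Submodule R V) :
    Set.InjOn (quotImage A · C) (Set.Icc A C) := by
  intro B ⟨hAB, hBC⟩ B' ⟨hAB', hBC'⟩ h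
  have hcomap : B.comap C.subtype = B'.comap C.subtype := by
    simpa [quotImage, Submodule.comap_map_mkQ, Submodule.comap_mono, hAB, hAB'] using
      congrArg (Submodule.comap (A.comap C.subtype).mkQ) h
  simpa [Submodule.map_comap_subtype, hBC, hBC'] using
    congrArg (Submodule.map C.subtype) hcomap

theorem exists_quotImage_eq (hAC : A ≤ C) (W : Submodule R (C ⧸ A.comap C.subtype)) :
    ∃ B, A ≤ B ∧ B ≤ C ∧ quotImage A B C = W := by
  refine ⟨(W.comap (A.comap C.subtype).mkQ).map C.subtype, ?_, Submodule.map_subtype_le _ _, ?_⟩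
  · calc A = (A.comap C.subtype).map C.subtype := by
          rw [Submodule.map_comap_subtype, inf_eq_right.2 hAC]
      _ ≤ _ := Submodule.map_mono (Submodule.le_comap_mkQ _ W)
  · rw [quotImage, Submodule.comap_map_eq_of_injective C.subtype_injective,
      Submodule.map_comap_eq_of_surjective (Submodule.mkQ_surjective _)]

/-- The map `B / A → C / A` induced by the inclusion `B ≤ C`. -/
def quotInclusion (A : Submodule R V) (hBC : B ≤ C) :
    B ⧸ A.comap B.subtype →ₗ[R] C ⧸ A.comap C.subtype :=
  (A.comap B.subtype).mapQ (A.comap C.subtype) (Submodule.inclusion hBC)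
    (by rw [← Submodule.comap_comp, Submodule.subtype_comp_inclusion])

theorem quotInclusion_injective (A : Submodule R V) (hBC : B ≤ C) :
    Function.Injective (quotInclusion A hBC) := by
  rw [← LinearMap.ker_eq_bot, quotInclusion, Submodule.ker_mapQ]
  exact Submodule.mkQ_map_self _

theorem range_quotInclusion (A : Submodule R V) (hBC : B ≤ C) :
    LinearMap.range (quotInclusion A hBC) = quotImage A B C := by
  rw [quotInclusion, Submodule.range_mapQ, Submodule.range_inclusion, quotImage]

end Subquotients

section RelativeLength

variable (F : Type*) {R V : Type*} [Ring F] [Ring R] [SMul F R] [AddCommGroup V] [Module F V]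
  [Module R V] [IsScalarTower F R V] {A B C : Submodule R V}

/-- The relative length of `A` in `B`: the length of `B / (A ∩ B)` over `F`. It takes values in `ℕ∞`
so that finite-dimensionality and the value of the dimension form a single equation. -/
def relLength (A B : Submodule R V) : ℕ∞ :=
  Module.length F (B ⧸ A.comap B.subtype)

theorem relLength_add (hAB : A ≤ B) (hBC : B ≤ C) :
    relLength F A B + relLength F B C = relLength F A C := by
  let g := Submodule.factor (Submodule.comap_mono (f := C.subtype) hAB)
  have hg : Function.Surjective g := Submodule.factor_surjective _
  have hexact : Function.Exact (quotInclusion A hBC) g := by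
    rw [LinearMap.exact_iff, range_quotInclusion, Submodule.ker_mapQ, Submodule.comap_id, quotImage]
  exact (Module.length_eq_add_of_exact ((quotInclusion A hBC).restrictScalars F)
    (g.restrictScalars F) (quotInclusion_injective A hBC) hg hexact).symm

theorem length_quotImage (A : Submodule R V) (hBC : B ≤ C) :
    Module.length F ((quotImage A B C).restrictScalars F) = relLength F A B := by
  rw [← range_quotInclusion A hBC]
  let e := LinearEquiv.ofInjective _ (quotInclusion_injective A hBC)
  exact (e.restrictScalars F).length_eq.symm

variable {F}

theorem relLength_map {V' : Type*} [AddCommGroup V'] [Module F V'] [Module R V']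
    [IsScalarTower F R V'] {f : V →ₗ[R] V'} (hf : Function.Injective f) (A B : Submodule R V) :
    relLength F (A.map f) (B.map f) = relLength F A B := by
  have hAB : (A.comap B.subtype).map (Submodule.equivMapOfInjective f hf B : B →ₗ[R] B.map f) =
      (A.map f).comap (B.map f).subtype := by
    ext y
    obtain ⟨x, rfl⟩ := (Submodule.equivMapOfInjective f hf B).surjective y
    simp [hf.eq_iff]
  exact ((Submodule.Quotient.equiv _ _ _ hAB).restrictScalars F).length_eq.symm

theorem relLength_comap {f : V →ₗ[R] V} (hf : Function.Bijective f) (A B : Submodule R V) :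
    relLength F (A.comap f) (B.comap f) = relLength F A B := by
  rw [← relLength_map hf.1, Submodule.map_comap_eq_of_surjective hf.2,
    Submodule.map_comap_eq_of_surjective hf.2]

theorem relLength_top (A : Submodule R V) : relLength F A ⊤ = Module.length F (V ⧸ A) := by
  have hA : (A.comap (⊤ : Submodule R V).subtype).map
      ((Submodule.topEquiv : (⊤ : Submodule R V) ≃ₗ[R] V) : (⊤ : Submodule R V) →ₗ[R] V) = A := by
    ext x
    simp
  exact ((Submodule.Quotient.equiv _ _ _ hA).restrictScalars F).length_eq

theorem relLength_comap_self_eq {f : V →ₗ[R] V} (hf : Function.Bijective f) (hAB : A ≤ B)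
    (hA : A ≤ A.comap f) (hB : B ≤ B.comap f) (hfin : relLength F A B ≠ ⊤) :
    relLength F A (A.comap f) = relLength F B (B.comap f) := by
  have hsum : relLength F A B + relLength F A (A.comap f) =
      relLength F A B + relLength F B (B.comap f) :=
    calc relLength F A B + relLength F A (A.comap f)
        = relLength F A (A.comap f) + relLength F (A.comap f) (B.comap f) := by
          rw [relLength_comap hf, add_comm]
      _ = relLength F A (B.comap f) := relLength_add F hA (Submodule.comap_mono hAB)
      _ = relLength F A B + relLength F B (B.comap f) := (relLength_add F hAB hB).symm
  exact ENat.add_right_injective_of_ne_top hfin hsum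

end RelativeLength

section VectorSpace

variable {F V : Type*} [DivisionRing F] [AddCommGroup V] [Module F V] {n : ℕ}

theorem length_eq_natCast_iff_finrank_eq :
    Module.length F V = n ↔ FiniteDimensional F V ∧ Module.finrank F V = n := by
  rw [Module.length_eq_rank, Cardinal.toENat_eq_natCast]
  refine ⟨fun h => ⟨Module.finite_of_rank_eq_nat h, Module.finrank_eq_of_rank_eq h⟩, ?_⟩
  rintro ⟨_, rfl⟩
  exact (Module.finrank_eq_rank F V).symm

theorem exists_submodule_finrank_eq (hn : n ≤ Module.finrank F V) :
    ∃ W : Submodule F V, Module.finrank F W = n := by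
  obtain ⟨s, hcard, hs⟩ := exists_finset_linearIndependent_of_le_finrank hn
  exact ⟨Submodule.span F s, by rw [finrank_span_finset_eq_card hs, hcard]⟩

end VectorSpace

section Evaluation

variable {F N : Type*} [CommRing F] [AddCommGroup N] [Module F N] [Module F[X] N]
  [IsScalarTower F F[X] N] {a : F}

theorem smul_eq_eval_smul {x : N} (hx : (X - C a) • x = 0) (p : F[X]) :
    p • x = p.eval a • x := by
  obtain ⟨q, hq⟩ := X_sub_C_dvd_sub_C_eval (p := p) (a := a)
  calc p • x = (C (p.eval a) + q * (X - C a)) • x := by rw [mul_comm q, ← hq, add_sub_cancel]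
    _ = p.eval a • x := by
      rw [add_smul, mul_smul, hx, smul_zero, add_zero, C_eq_algebraMap, algebraMap_smul]

theorem exists_restrictScalars_eq (h : ∀ x : N, (X - C a) • x = 0) (W : Submodule F N) :
    ∃ W' : Submodule F[X] N, W'.restrictScalars F = W :=
  ⟨{ W with
      smul_mem' := fun p x hx => smul_eq_eval_smul (h x) p ▸ W.smul_mem (p.eval a) hx }, rfl⟩

variable {V : Type*} [AddCommGroup V] [Module F V] [Module F[X] V] [IsScalarTower F F[X] V]
  {A P : Submodule F[X] V}

theorem exists_restrictScalars_quotImage_eq (hAP : A ≤ P) (hP : ∀ x ∈ P, (X - C a) • x ∈ A)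
    (W : Submodule F (P ⧸ A.comap P.subtype)) :
    ∃ B, A ≤ B ∧ B ≤ P ∧ (quotImage A B P).restrictScalars F = W := by
  have hzero : ∀ x : P ⧸ A.comap P.subtype, (X - C a) • x = 0 := by
    intro x
    obtain ⟨y, rfl⟩ := Submodule.mkQ_surjective _ x
    rw [← map_smul]
    exact (Submodule.Quotient.mk_eq_zero _).2 (hP y y.2)
  obtain ⟨W', rfl⟩ := exists_restrictScalars_eq hzero W
  obtain ⟨B, hAB, hBP, rfl⟩ := exists_quotImage_eq hAP W'
  exact ⟨B, hAB, hBP, rfl⟩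

end Evaluation

section QuotientPi

theorem length_quotient_pi (F : Type*) {R ι : Type*} [Fintype ι] {M : ι → Type*} [Ring F]
    [CommRing R] [SMul F R] [∀ j, AddCommGroup (M j)] [∀ j, Module F (M j)]
    [∀ j, Module R (M j)] [∀ j, IsScalarTower F R (M j)] (p : ∀ j, Submodule R (M j)) :
    Module.length F ((∀ j, M j) ⧸ Submodule.pi Set.univ p) = ∑ j, Module.length F (M j ⧸ p j) := by
  classical
  rw [← Module.length_pi_of_fintype]
  exact ((Submodule.quotientPi p).restrictScalars F).length_eq

theorem map_smul_id_top_eq_pi_span {R : Type*} [CommRing R] (ι : Type*) (r : R) :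
    (⊤ : Submodule R (ι → R)).map (r • LinearMap.id) =
      Submodule.pi Set.univ fun _ => Ideal.span {r} := by
  ext p
  simp only [Submodule.mem_map, Submodule.mem_top, true_and, LinearMap.smul_apply,
    LinearMap.id_apply, Submodule.mem_pi, Set.mem_univ, forall_const,
    Ideal.mem_span_singleton', funext_iff, Pi.smul_apply, smul_eq_mul, mul_comm r]
  exact ⟨fun ⟨q, hq⟩ j => ⟨q j, hq j⟩, Classical.skolem.1⟩

theorem length_quotient_span_X_sub_C {F : Type*} [Field F] (a : F) :
    Module.length F (F[X] ⧸ Ideal.span {X - C a}) = 1 := by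
  rw [(quotientSpanXSubCAlgEquiv a).toLinearEquiv.length_eq, Module.length_eq_one]

theorem relLength_map_X_sub_C_smul_id_top {F : Type*} [Field F] (ι : Type*) [Fintype ι] (a : F) :
    relLength F ((⊤ : Submodule F[X] (ι → F[X])).map ((X - C a) • LinearMap.id)) ⊤ =
      Fintype.card ι := by
  rw [relLength_top, map_smul_id_top_eq_pi_span, length_quotient_pi]
  simp only [length_quotient_span_X_sub_C, Finset.sum_const, Finset.card_univ, nsmul_one]

end QuotientPi

section Lattices

variable {m : ℕ}

theorem zmul_bijective (a : ℂ) : Function.Bijective (zmul m a) := by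
  have ha : algebraMap ℂ[X] (RatFunc ℂ) (X - C a) ≠ 0 :=
    RatFunc.algebraMap_ne_zero (X_sub_C_ne_zero a)
  have hzmul : ∀ x j, zmul m a x j = algebraMap ℂ[X] (RatFunc ℂ) (X - C a) * x j :=
    fun x j => Algebra.smul_def (X - C a) (x j)
  refine ⟨fun x y hxy => funext fun j => mul_left_cancel₀ ha ?_, fun y => ?_⟩
  · rw [← hzmul, ← hzmul, hxy]
  · exact ⟨fun j => (algebraMap ℂ[X] (RatFunc ℂ) (X - C a))⁻¹ * y j,
      funext fun j => by rw [hzmul, mul_inv_cancel_left₀ ha]⟩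

theorem zmul_zmul_comm (a b : ℂ) (x : KM m) : zmul m a (zmul m b x) = zmul m b (zmul m a x) :=
  smul_comm (X - C a) (X - C b) x

theorem map_zmul_comap_zmul (a : ℂ) (A : SubM m) : (A.comap (zmul m a)).map (zmul m a) = A :=
  Submodule.map_comap_eq_of_surjective (zmul_bijective a).2 A

theorem comap_zmul_map_zmul (a : ℂ) (A : SubM m) : (A.map (zmul m a)).comap (zmul m a) = A :=
  Submodule.comap_map_eq_of_injective (zmul_bijective a).1 A

theorem le_comap_zmul (a : ℂ) (A : SubM m) : A ≤ A.comap (zmul m a) :=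
  fun _ hx => A.smul_mem _ hx

theorem polyL0_eq_map_top (m : ℕ) :
    polyL0 m = (⊤ : Submodule ℂ[X] (Fin m → ℂ[X])).map
      ((Algebra.linearMap ℂ[X] (RatFunc ℂ)).compLeft (Fin m)) := by
  ext x
  simp only [polyL0, Submodule.mem_pi, Set.mem_univ, forall_const, LinearMap.mem_range,
    Submodule.mem_map, Submodule.mem_top, true_and, funext_iff]
  exact Classical.skolem

theorem relLength_polyL0_comap_zmul (m : ℕ) (a : ℂ) :
    relLength ℂ (polyL0 m) ((polyL0 m).comap (zmul m a)) = m := by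
  have hinj : Function.Injective ((Algebra.linearMap ℂ[X] (RatFunc ℂ)).compLeft (Fin m)) :=
    (RatFunc.algebraMap_injective ℂ).comp_left
  have hcomm : zmul m a ∘ₗ (Algebra.linearMap ℂ[X] (RatFunc ℂ)).compLeft (Fin m) =
      (Algebra.linearMap ℂ[X] (RatFunc ℂ)).compLeft (Fin m) ∘ₗ ((X - C a) • LinearMap.id) :=
    LinearMap.ext fun p =>
      (map_smul ((Algebra.linearMap ℂ[X] (RatFunc ℂ)).compLeft (Fin m)) (X - C a) p).symm
  rw [← relLength_map (zmul_bijective a).1, map_zmul_comap_zmul, polyL0_eq_map_top,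
    ← Submodule.map_comp, hcomm, Submodule.map_comp, relLength_map hinj,
    relLength_map_X_sub_C_smul_id_top, Fintype.card_fin]

end Lattices

section Steps

variable {m k l : ℕ} {a : ℂ} {A B N : SubM m}

/-- A single step `A ⊆ B` of a chain in `Y(k̲)_w̲`, of colength `k` at the point `a`. -/
structure IsYStep (k : ℕ) (a : ℂ) (A B : SubM m) : Prop where
  le : A ≤ B
  relLength_eq : relLength ℂ A B = k
  le_comap : B ≤ A.comap (zmul m a)

theorem relLength_eq_natCast_iff :
    relLength ℂ A B = k ↔ FiniteDimensional ℂ (QuotMod m A B) ∧ fdim m A B = k :=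
  length_eq_natCast_iff_finrank_eq

theorem isYChain_iff_s6 {n : ℕ} {k : ℕ → ℕ} {w : ℕ → ℂ} {L : ℕ → SubM m} :
    IsYChain m n k w L ↔
      L 0 = polyL0 m ∧ ∀ j < n, IsYStep (k (j + 1)) (w (j + 1)) (L j) (L (j + 1)) := by
  refine and_congr_right fun _ => ⟨fun ⟨hle, hfin, hdim, hcomap⟩ j hj => ?_, fun h => ?_⟩
  · exact ⟨hle j hj, relLength_eq_natCast_iff.2 ⟨hfin j hj, hdim j hj⟩, hcomap j hj⟩
  · exact ⟨fun j hj => (h j hj).le,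
      fun j hj => (relLength_eq_natCast_iff.1 (h j hj).relLength_eq).1,
      fun j hj => (relLength_eq_natCast_iff.1 (h j hj).relLength_eq).2,
      fun j hj => (h j hj).le_comap⟩

theorem IsYStep.map_zmul (h : IsYStep k a A B) (b : ℂ) :
    IsYStep k a (A.map (zmul m b)) (B.map (zmul m b)) where
  le := Submodule.map_mono h.le
  relLength_eq := by rw [relLength_map (zmul_bijective b).1, h.relLength_eq]
  le_comap := by
    rintro _ ⟨x, hx, rfl⟩
    exact ⟨zmul m a x, h.le_comap hx, zmul_zmul_comm b a x⟩

theorem IsYStep.comap_zmul (h : IsYStep k a A B) (b : ℂ) :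
    IsYStep k a (A.comap (zmul m b)) (B.comap (zmul m b)) where
  le := Submodule.comap_mono h.le
  relLength_eq := by rw [relLength_comap (zmul_bijective b), h.relLength_eq]
  le_comap x hx := by
    rw [Submodule.mem_comap, Submodule.mem_comap, zmul_zmul_comm]
    exact h.le_comap hx

theorem IsYStep.relLength_comap_zmul_eq (h : IsYStep k a A B) (b : ℂ) :
    relLength ℂ A (A.comap (zmul m b)) = relLength ℂ B (B.comap (zmul m b)) :=
  relLength_comap_self_eq (zmul_bijective b) h.le (le_comap_zmul b A) (le_comap_zmul b B)
    (h.relLength_eq ▸ ENat.natCast_ne_top k)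

theorem IsYStep.step_comap (h : IsYStep k a A N) (hA : relLength ℂ A (A.comap (zmul m a)) = m)
    (hkl : k + l = m) : IsYStep l a N (A.comap (zmul m a)) where
  le := h.le_comap
  relLength_eq := by
    have hsum : (k : ℕ∞) + relLength ℂ N (A.comap (zmul m a)) = k + l := by
      rw [← h.relLength_eq, relLength_add ℂ h.le h.le_comap, hA, h.relLength_eq, ← Nat.cast_add,
        hkl]
    exact ENat.add_right_injective_of_ne_top (ENat.natCast_ne_top k) hsum
  le_comap := Submodule.comap_mono h.le

end Steps

section Chains

variable {α : Type*} {m n i j : ℕ} {k : ℕ → ℕ} {w : ℕ → ℂ} {L L' M : ℕ → SubM m}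

theorem IsYChain.relLength_comap_zmul (hL : IsYChain m n k w L) (a : ℂ) (hj : j ≤ n) :
    relLength ℂ (L j) ((L j).comap (zmul m a)) = m := by
  rw [isYChain_iff_s6] at hL
  induction j with
  | zero => rw [hL.1, relLength_polyL0_comap_zmul]
  | succ j ih => rw [← (hL.2 j hj).relLength_comap_zmul_eq, ih (by lia)]

theorem dropAt_of_lt (f : ℕ → α) (h : j < i) : dropAt i f j = f j :=
  if_pos h

theorem dropAt_of_le (f : ℕ → α) (h : i ≤ j) : dropAt i f j = f (j + 2) :=
  if_neg h.not_gt

theorem qChain_of_lt (w : ℕ → ℂ) (L : ℕ → SubM m) (h : j < i) : qChain m i w L j = L j :=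
  if_pos h

theorem qChain_of_le (w : ℕ → ℂ) (L : ℕ → SubM m) (h : i ≤ j) :
    qChain m i w L j = (L (j + 2)).map (zmul m (w i)) :=
  if_neg h.not_gt

theorem qChain_succ_of_le (hX : (L (i + 2)).map (zmul m (w (i + 1))) = L i) (h : i ≤ j) :
    qChain m (i + 1) w L j = (L (j + 2)).map (zmul m (w (i + 1))) := by
  rcases h.eq_or_lt with rfl | hij
  · rw [qChain_of_lt w L (Nat.lt_succ_self i), hX]
  · exact qChain_of_le w L hij

theorem IsYChain.qChain (hL : IsYChain m n k w L)
    (hX : (L (i + 2)).map (zmul m (w (i + 1))) = L i) :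
    IsYChain m (n - 2) (dropAt (i + 1) k) (dropAt (i + 1) w) (qChain m (i + 1) w L) := by
  rw [isYChain_iff_s6] at hL ⊢
  obtain ⟨hzero, hstep⟩ := hL
  refine ⟨by rw [qChain_of_lt w L i.succ_pos, hzero], fun j hj => ?_⟩
  rcases lt_or_ge j i with hji | hij
  · rw [dropAt_of_lt k (by lia), dropAt_of_lt w (by lia), qChain_of_lt w L (by lia),
      qChain_of_lt w L (by lia)]
    exact hstep j (by lia)
  · rw [dropAt_of_le k (by lia), dropAt_of_le w (by lia), qChain_succ_of_le hX hij,
      qChain_succ_of_le hX (by lia)]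
    exact (hstep (j + 2) (by lia)).map_zmul _

/-- The chain `M₀ ⊆ ⋯ ⊆ M_i ⊆ N ⊆ (z-a)⁻¹M_i ⊆ (z-a)⁻¹M_{i+1} ⊆ ⋯`, whose entry of index `i + 1`
is `N`. With `a = w_{i+1}`, these chains make up the fibre of `q` over `M`. -/
def liftChain (i : ℕ) (a : ℂ) (M : ℕ → SubM m) (N : SubM m) (j : ℕ) : SubM m :=
  if j ≤ i then M j else if j = i + 1 then N else (M (j - 2)).comap (zmul m a)

theorem liftChain_of_le (a : ℂ) (M : ℕ → SubM m) (N : SubM m) (h : j ≤ i) :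
    liftChain i a M N j = M j :=
  if_pos h

theorem liftChain_succ (i : ℕ) (a : ℂ) (M : ℕ → SubM m) (N : SubM m) :
    liftChain i a M N (i + 1) = N := by
  simp [liftChain]

theorem liftChain_add_two (a : ℂ) (M : ℕ → SubM m) (N : SubM m) (h : i ≤ j) :
    liftChain i a M N (j + 2) = (M j).comap (zmul m a) := by
  rw [liftChain, if_neg (by lia), if_neg (by lia), Nat.add_sub_cancel]

theorem isYChain_liftChain {N : SubM m}
    (hM : IsYChain m (n - 2) (dropAt (i + 1) k) (dropAt (i + 1) w) M) (hin : i + 2 ≤ n)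
    (hk : k (i + 1) + k (i + 2) = m) (hw : w (i + 1) = w (i + 2))
    (hN : IsYStep (k (i + 1)) (w (i + 1)) (M i) N) :
    IsYChain m n k w (liftChain i (w (i + 1)) M N) := by
  have hlen := hM.relLength_comap_zmul (w (i + 1)) (j := i) (by lia)
  rw [isYChain_iff_s6] at hM ⊢
  obtain ⟨hzero, hstep⟩ := hM
  refine ⟨by rw [liftChain_of_le _ _ _ i.zero_le, hzero], fun j hj => ?_⟩
  obtain hji | rfl | rfl | ⟨t, rfl, hit⟩ :
      j < i ∨ j = i ∨ j = i + 1 ∨ ∃ t, j = t + 2 ∧ i ≤ t := by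
    by_cases hij : i + 2 ≤ j
    · exact .inr <| .inr <| .inr ⟨j - 2, by lia, by lia⟩
    · lia
  · rw [liftChain_of_le _ _ _ hji.le, liftChain_of_le _ _ _ hji]
    simpa only [dropAt_of_lt _ (Nat.succ_lt_succ hji)] using hstep j (by lia)
  · rwa [liftChain_of_le _ _ _ le_rfl, liftChain_succ]
  · rw [liftChain_succ, liftChain_add_two _ _ _ le_rfl, ← hw]
    exact hN.step_comap hlen hk
  · rw [liftChain_add_two _ _ _ hit, show t + 2 + 1 = t + 1 + 2 from rfl,
      liftChain_add_two _ _ _ (by lia)]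
    simpa only [dropAt_of_le _ (Nat.succ_le_succ hit)] using
      (hstep t (by lia)).comap_zmul (w (i + 1))

theorem qChain_liftChain (i : ℕ) (w : ℕ → ℂ) (M : ℕ → SubM m) (N : SubM m) :
    qChain m (i + 1) w (liftChain i (w (i + 1)) M N) = M := by
  funext j
  rcases lt_or_ge j (i + 1) with hji | hij
  · rw [qChain_of_lt _ _ hji, liftChain_of_le _ _ _ (by lia)]
  · rw [qChain_of_le _ _ hij, liftChain_add_two _ _ _ (by lia), map_zmul_comap_zmul]

theorem inFibre_liftChain {N : SubM m}
    (hM : IsYChain m (n - 2) (dropAt (i + 1) k) (dropAt (i + 1) w) M) (hin : i + 2 ≤ n)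
    (hk : k (i + 1) + k (i + 2) = m) (hw : w (i + 1) = w (i + 2))
    (hN : IsYStep (k (i + 1)) (w (i + 1)) (M i) N) :
    InFibre m n (i + 1) k w M (liftChain i (w (i + 1)) M N) := by
  refine ⟨isYChain_liftChain hM hin hk hw hN, ?_, fun j _ => by rw [qChain_liftChain]⟩
  rw [liftChain_add_two _ _ _ le_rfl, map_zmul_comap_zmul, Nat.add_sub_cancel,
    liftChain_of_le _ _ _ le_rfl]

theorem InFibre.eq_liftChain (hL : InFibre m n (i + 1) k w M L) (hin : i + 2 ≤ n) (hj : j ≤ n) :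
    L j = liftChain i (w (i + 1)) M (L (i + 1)) j := by
  obtain ⟨-, hX, hq⟩ := hL
  obtain hji | rfl | ⟨t, rfl, hit⟩ : j ≤ i ∨ j = i + 1 ∨ ∃ t, j = t + 2 ∧ i ≤ t := by
    by_cases hij : i + 2 ≤ j
    · exact .inr <| .inr ⟨j - 2, by lia, by lia⟩
    · lia
  · rw [liftChain_of_le _ _ _ hji, ← hq j (by lia), qChain_of_lt _ _ (by lia)]
  · rw [liftChain_succ]
  · rw [liftChain_add_two _ _ _ hit, ← hq t (by lia), qChain_succ_of_le hX hit,
      comap_zmul_map_zmul]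

theorem InFibre.isYStep (hL : InFibre m n (i + 1) k w M L) (hin : i + 2 ≤ n) :
    IsYStep (k (i + 1)) (w (i + 1)) (M i) (L (i + 1)) := by
  have hMi : L i = M i := by rw [hL.eq_liftChain hin (by lia), liftChain_of_le _ _ _ le_rfl]
  exact hMi ▸ (isYChain_iff_s6.1 hL.1).2 i (by lia)

theorem fibreImg_succ_eq_quotImage (i : ℕ) (M : ℕ → SubM m) (P : SubM m) (L : ℕ → SubM m) :
    fibreImg m (i + 1) M P L = (quotImage (M i) (L (i + 1)) P).restrictScalars ℂ :=
  rfl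

theorem InFibre.eq_of_fibreImg_eq (hL : InFibre m n (i + 1) k w M L)
    (hL' : InFibre m n (i + 1) k w M L') (hin : i + 2 ≤ n)
    (h : fibreImg m (i + 1) M ((M i).comap (zmul m (w (i + 1)))) L =
      fibreImg m (i + 1) M ((M i).comap (zmul m (w (i + 1)))) L') (hj : j ≤ n) :
    L j = L' j := by
  have hstep := hL.isYStep hin
  have hstep' := hL'.isYStep hin
  have hmid : L (i + 1) = L' (i + 1) :=
    quotImage_injOn _ _ ⟨hstep.le, hstep.le_comap⟩ ⟨hstep'.le, hstep'.le_comap⟩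
      (Submodule.restrictScalars_injective ℂ _ _ h)
  rw [hL.eq_liftChain hin hj, hL'.eq_liftChain hin hj, hmid]

theorem exists_inFibre_fibreImg_eq_iff
    (hM : IsYChain m (n - 2) (dropAt (i + 1) k) (dropAt (i + 1) w) M) (hin : i + 2 ≤ n)
    (hk : k (i + 1) + k (i + 2) = m) (hw : w (i + 1) = w (i + 2))
    (W : Submodule ℂ (QuotMod m (M i) ((M i).comap (zmul m (w (i + 1)))))) :
    (∃ L, InFibre m n (i + 1) k w M L ∧
        fibreImg m (i + 1) M ((M i).comap (zmul m (w (i + 1)))) L = W) ↔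
      Module.finrank ℂ W = k (i + 1) := by
  have hfin := (relLength_eq_natCast_iff.1
    (hM.relLength_comap_zmul (w (i + 1)) (j := i) (by lia))).1
  constructor
  · rintro ⟨L, hL, rfl⟩
    have hstep := hL.isYStep hin
    exact (length_eq_natCast_iff_finrank_eq.1
      ((length_quotImage ℂ (M i) hstep.le_comap).trans hstep.relLength_eq)).2
  · intro hW
    obtain ⟨N, hMN, hNP, rfl⟩ := exists_restrictScalars_quotImage_eq
      (le_comap_zmul (w (i + 1)) (M i)) (fun _ hx => hx) W
    have hN : IsYStep (k (i + 1)) (w (i + 1)) (M i) N :=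
      ⟨hMN, (length_quotImage ℂ (M i) hNP).symm.trans
        (length_eq_natCast_iff_finrank_eq.2 ⟨inferInstance, hW⟩), hNP⟩
    refine ⟨_, inFibre_liftChain hM hin hk hw hN, ?_⟩
    rw [fibreImg_succ_eq_quotImage, liftChain_succ]

theorem IsYChain.exists_inFibre
    (hM : IsYChain m (n - 2) (dropAt (i + 1) k) (dropAt (i + 1) w) M) (hin : i + 2 ≤ n)
    (hk : k (i + 1) + k (i + 2) = m) (hw : w (i + 1) = w (i + 2)) :
    ∃ L, InFibre m n (i + 1) k w M L := by
  have hdim := (relLength_eq_natCast_iff.1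
    (hM.relLength_comap_zmul (w (i + 1)) (j := i) (by lia))).2
  obtain ⟨W, hW⟩ := exists_submodule_finrank_eq (n := k (i + 1))
    (show k (i + 1) ≤ fdim m (M i) ((M i).comap (zmul m (w (i + 1)))) by lia)
  obtain ⟨L, hL, -⟩ := (exists_inFibre_fibreImg_eq_iff hM hin hk hw W).2 hW
  exact ⟨L, hL⟩

end Chains

/-- the map `q : X(k)^i_w → Y(d_i·k)_{d_i·w}` is well defined and
surjective, and its fibre over a point `(M₁,…,M_{n-2})` is in bijection, via
`L ↦ L_i/L_{i-1}`, with the `k_i`-dimensional subspaces of the `m`-dimensional space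
`L_{i+1}/M_{i-1}` where `L_{i+1} = {x : (z-w_i)·x ∈ M_{i-1}}`. -/
theorem statement6 (m : ℕ) (hm : 2 ≤ m) (n : ℕ) (k : ℕ → ℕ) (w : ℕ → ℂ)
    (hk : ∀ j, 1 ≤ j → j ≤ n → 1 ≤ k j ∧ k j ≤ m - 1)
    (i : ℕ) (hi : 1 ≤ i) (hin : i + 1 ≤ n)
    (hki : k i + k (i + 1) = m) (hww : w i = w (i + 1)) :
    -- q is well defined
    (∀ L : ℕ → SubM m, IsYChain m n k w L →
        (L (i + 1)).map (zmul m (w i)) = L (i - 1) →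
        IsYChain m (n - 2) (dropAt i k) (dropAt i w) (qChain m i w L)) ∧
    -- q is surjective
    (∀ Mc : ℕ → SubM m, IsYChain m (n - 2) (dropAt i k) (dropAt i w) Mc →
        ∃ L : ℕ → SubM m, InFibre m n i k w Mc L) ∧
    -- description of the fibres
    (∀ Mc : ℕ → SubM m, IsYChain m (n - 2) (dropAt i k) (dropAt i w) Mc →
      ∀ P : SubM m, P = (Mc (i - 1)).comap (zmul m (w i)) →
        -- P/M_{i-1} is an m-dimensional ℂ-vector space
        fdim m (Mc (i - 1)) P = m ∧
        -- L ↦ L_i/M_{i-1} is injective on the fibre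
        (∀ L L' : ℕ → SubM m, InFibre m n i k w Mc L → InFibre m n i k w Mc L' →
            fibreImg m i Mc P L = fibreImg m i Mc P L' → ∀ j ≤ n, L j = L' j) ∧
        -- and its image is exactly the set of k_i-dimensional subspaces
        (∀ V : Submodule ℂ (QuotMod m (Mc (i - 1)) P),
            (∃ L : ℕ → SubM m, InFibre m n i k w Mc L ∧ fibreImg m i Mc P L = V) ↔
              Module.finrank ℂ ↥V = k i)) := by
  obtain ⟨i, rfl⟩ := Nat.exists_eq_add_of_le' hi
  refine ⟨fun L hL hX => hL.qChain hX, fun M hM => hM.exists_inFibre hin hki hww, ?_⟩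
  rintro M hM P rfl
  refine ⟨?_, fun L L' hL hL' h j hj => hL.eq_of_fibreImg_eq hL' hin h hj,
    exists_inFibre_fibreImg_eq_iff hM hin hki hww⟩
  exact (relLength_eq_natCast_iff.1 (hM.relLength_comap_zmul (w (i + 1)) (by lia))).2
end
end

section
/- Suppose 1 ≤ i ≤ n−1, w_i = w_{i+1} =: w and k_i ≤ k_{i+1}, and set N := min(k_i+k_{i+1}, m). Then for every point ((L_•),(L'_•)) ∈ Z(k̲)^i_w̲ one has k_{i+1} ≤ dim_ℂ ker((z−w)|_{L_{i+1}/L_{i−1}}) ≤ N. Consequently Z(k̲)^i_w̲ is the union of the subsets Z_s(k̲)^i_w̲ for s = 0, 1, …, N − k_{i+1}. -/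
open Polynomial

set_option synthInstance.maxHeartbeats 1000000
set_option maxHeartbeats 1000000

noncomputable section

/-!
Multiplication by `z - w` kills the subspaces `L_i / L_{i-1}` and `L'_i / L_{i-1}` of
`L_{i+1} / L_{i-1}`, so its kernel has dimension at least `k_{i+1}`, and the dimension formula for
the sum of the two subspaces bounds their intersection from below. The given point therefore
lies in the piece with `s = dim ker - k_{i+1}`, the largest value its kernel allows.

The kernel has dimension at most `m` because vectors of `L_{i+1}` that lift linearly independent
elements of it are linearly independent over `ℂ[z]`: a nontrivial relation may be divided by the
greatest common divisor of its coefficients, and since `ℂ[z]` acts on the kernel through evaluation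
at `w`, evaluating the coefficients gives a relation in the kernel that is still nontrivial.
-/

universe u v

section LinearIndependence

variable {R K ι : Type*} {M : Type u} {V : Type v} [CommRing R] [IsDomain R] [IsBezout R]

theorem exists_eq_mul_and_sum_mul_eq_one (s : Finset ι) (g : ι → R) (hg : ∃ i ∈ s, g i ≠ 0) :
    ∃ (e : R) (p c : ι → R), e ≠ 0 ∧ (∀ i ∈ s, g i = e * p i) ∧ ∑ i ∈ s, c i * p i = 1 := by
  obtain ⟨e, he : Ideal.span (g '' s) = Ideal.span {e}⟩ :=
    (IsBezout.isPrincipal_of_FG (Ideal.span (g '' s))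
      (Submodule.fg_span (s.finite_toSet.image g))).principal
  have hdvd : ∀ i, ∃ q, i ∈ s → g i = e * q := fun i ↦ by
    by_cases his : i ∈ s
    · have hmem : g i ∈ Ideal.span (g '' s) := Ideal.subset_span ⟨i, his, rfl⟩
      obtain ⟨q, hq⟩ := Ideal.mem_span_singleton.1 (he ▸ hmem)
      exact ⟨q, fun _ ↦ hq⟩
    · exact ⟨0, fun h ↦ absurd h his⟩
  choose p hp using hdvd
  have he0 : e ≠ 0 := by
    rintro rfl
    obtain ⟨i, his, hi⟩ := hg
    exact hi (by rw [hp i his, zero_mul])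
  obtain ⟨c, hc⟩ : ∃ c : ι → R, ∑ i ∈ s, c i • g i = e :=
    Submodule.mem_span_image_finset_iff_exists_fun' R |>.1
      (he ▸ Ideal.mem_span_singleton_self e : e ∈ Ideal.span (g '' s))
  refine ⟨e, p, c, he0, hp, mul_left_cancel₀ he0 ?_⟩
  calc e * ∑ i ∈ s, c i * p i = ∑ i ∈ s, c i • g i := by
        rw [Finset.mul_sum]
        exact Finset.sum_congr rfl fun i his ↦ by rw [hp i his, smul_eq_mul, mul_left_comm]
    _ = e * 1 := by rw [hc, mul_one]

variable [AddCommGroup M] [Module R M] [Module.IsTorsionFree R M] [AddCommGroup V] [Module R V]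

theorem linearIndependent_of_smul_eq_ringHom_smul [Ring K] [Nontrivial K] [Module K V]
    (ε : R →+* K) (π : M →ₗ[R] V) {y : ι → M} (hε : ∀ r j, r • π (y j) = ε r • π (y j))
    (hy : LinearIndependent K (π ∘ y)) : LinearIndependent R y := by
  rw [linearIndependent_iff']
  intro s g hg
  by_contra! hne
  obtain ⟨e, p, c, he, hgp, hcp⟩ := exists_eq_mul_and_sum_mul_eq_one s g hne
  have hrel : ∑ j ∈ s, p j • y j = 0 := by
    refine (smul_eq_zero_iff_right he).1 ?_
    rw [← hg, Finset.smul_sum]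
    exact Finset.sum_congr rfl fun j hj ↦ by rw [smul_smul, hgp j hj]
  have hεp : ∀ j ∈ s, ε (p j) = 0 := by
    refine linearIndependent_iff'.1 hy s (fun j ↦ ε (p j)) ?_
    simpa only [Function.comp_apply, map_sum, map_smul, hε, map_zero] using congrArg π hrel
  apply one_ne_zero (α := K)
  rw [← map_one ε, ← hcp, map_sum]
  exact Finset.sum_eq_zero fun j hj ↦ by rw [map_mul, hεp j hj, mul_zero]

theorem lift_rank_le_of_smul_eq_ringHom_smul [DivisionRing K] [Module K V]
    (ε : R →+* K) (π : M →ₗ[R] V) (hπ : Function.Surjective π) (W : Submodule K V)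
    (hW : ∀ r : R, ∀ v ∈ W, r • v = ε r • v) :
    Cardinal.lift.{u} (Module.rank K W) ≤ Cardinal.lift.{v} (Module.rank R M) := by
  let b := Module.Basis.ofVectorSpace K W
  choose y hy using fun j ↦ hπ (b j)
  have hb : LinearIndependent K (π ∘ y) := by
    rw [show π ∘ y = W.subtype ∘ b from funext hy]
    exact b.linearIndependent.map' W.subtype W.ker_subtype
  have hε : ∀ r j, r • π (y j) = ε r • π (y j) := fun r j ↦ by
    rw [hy]
    exact hW r _ (b j).2
  rw [← b.mk_eq_rank'']
  exact (linearIndependent_of_smul_eq_ringHom_smul ε π hε hb).cardinal_lift_le_rank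

end LinearIndependence

section Polynomial

theorem smul_eq_eval_smul_of_X_sub_C_smul_eq_zero {K V : Type*} [CommRing K] [AddCommGroup V]
    [Module K V] [Module K[X] V] [IsScalarTower K K[X] V] {a : K} {v : V}
    (hv : (X - C a) • v = 0) (p : K[X]) : p • v = p.eval a • v := by
  obtain ⟨q, hq⟩ := X_sub_C_dvd_sub_C_eval (a := a) (p := p)
  rw [← algebraMap_smul K[X] (p.eval a) v, algebraMap_eq, ← sub_eq_zero, ← sub_smul, hq, mul_comm,
    mul_smul, hv, smul_zero]

theorem lift_rank_ker_lsmul_X_sub_C_le {K : Type*} {M : Type u} {V : Type v} [Field K]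
    [AddCommGroup M] [Module K[X] M] [Module.IsTorsionFree K[X] M]
    [AddCommGroup V] [Module K V] [Module K[X] V] [IsScalarTower K K[X] V]
    (π : M →ₗ[K[X]] V) (hπ : Function.Surjective π) (a : K) :
    Cardinal.lift.{u} (Module.rank K (Algebra.lsmul K K V (X - C a : K[X])).ker) ≤
      Cardinal.lift.{v} (Module.rank K[X] M) :=
  lift_rank_le_of_smul_eq_ringHom_smul (evalRingHom a) π hπ _ fun p _ hv ↦
    smul_eq_eval_smul_of_X_sub_C_smul_eq_zero (LinearMap.mem_ker.1 hv) p

end Polynomial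

section Subquotient

variable {R M : Type*} [Ring R] [AddCommGroup M] [Module R M]

/-- The subquotient `B / A` of a module, meaning `B / (A ∩ B)` when `A` is not contained in `B`. -/
abbrev Subquotient (A B : Submodule R M) : Type _ := ↥B ⧸ A.comap B.subtype

variable (K : Type*) [Field K] [Algebra K R] [Module K M] [IsScalarTower K R M]

/-- The image of `B / A` in `C / A`, as a `K`-subspace. It makes the subquotients with
the same denominator `A` comparable inside one vector space. -/
def subquotientIn (A B C : Submodule R M) : Submodule K (Subquotient A C) :=
  ((B.comap C.subtype).map (A.comap C.subtype).mkQ).restrictScalars K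

variable {A B B' C : Submodule R M}

theorem mk_mem_subquotientIn_iff (hAB : A ≤ B) {x : C} :
    Submodule.Quotient.mk x ∈ subquotientIn K A B C ↔ (x : M) ∈ B := by
  change x ∈ ((B.comap C.subtype).map (A.comap C.subtype).mkQ).comap (A.comap C.subtype).mkQ ↔ _
  rw [Submodule.comap_map_mkQ, sup_eq_right.2 (Submodule.comap_mono hAB)]
  rfl

theorem subquotientIn_inf (hAB : A ≤ B) (hAB' : A ≤ B') :
    subquotientIn K A B C ⊓ subquotientIn K A B' C = subquotientIn K A (B ⊓ B') C := by
  ext v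
  obtain ⟨x, rfl⟩ := Submodule.Quotient.mk_surjective _ v
  simp only [Submodule.mem_inf, mk_mem_subquotientIn_iff K hAB, mk_mem_subquotientIn_iff K hAB',
    mk_mem_subquotientIn_iff K (le_inf hAB hAB')]

/-- The isomorphism from `B / A` onto its image in `C / A`. -/
def subquotientEquivSubquotientIn (hBC : B ≤ C) :
    Subquotient A B ≃ₗ[K] subquotientIn K A B C :=
  let φ := (A.comap C.subtype).mkQ ∘ₗ Submodule.inclusion hBC
  have hker : A.comap B.subtype = LinearMap.ker φ := by
    rw [LinearMap.ker_comp, Submodule.ker_mkQ]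
    rfl
  have hrange : LinearMap.range φ = (B.comap C.subtype).map (A.comap C.subtype).mkQ := by
    rw [LinearMap.range_comp, Submodule.range_inclusion]
  ((Submodule.quotEquivOfEq _ _ hker).trans
    (φ.quotKerEquivRange.trans (LinearEquiv.ofEq _ _ hrange))).restrictScalars K

/-- The third isomorphism theorem `(C / A) / (B / A) ≃ C / B`. -/
def quotientSubquotientInEquiv (hAB : A ≤ B) :
    (Subquotient A C ⧸ subquotientIn K A B C) ≃ₗ[K] Subquotient B C :=
  (Submodule.Quotient.restrictScalarsEquiv K _).trans
    ((Submodule.quotientQuotientEquivQuotient _ _ (Submodule.comap_mono hAB)).restrictScalars K)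

theorem finiteDimensional_subquotient_trans (hAB : A ≤ B) (hBC : B ≤ C)
    [FiniteDimensional K (Subquotient A B)] [FiniteDimensional K (Subquotient B C)] :
    FiniteDimensional K (Subquotient A C) :=
  have := Module.Finite.equiv (subquotientEquivSubquotientIn K (A := A) hBC)
  have := Module.Finite.equiv (quotientSubquotientInEquiv K (C := C) hAB).symm
  Module.Finite.of_submodule_quotient (subquotientIn K A B C)

theorem finrank_subquotient_add_finrank_subquotient (hAB : A ≤ B) (hBC : B ≤ C)
    [FiniteDimensional K (Subquotient A C)] :
    Module.finrank K (Subquotient A B) + Module.finrank K (Subquotient B C) =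
      Module.finrank K (Subquotient A C) := by
  rw [(subquotientEquivSubquotientIn K hBC).finrank_eq,
    ← (quotientSubquotientInEquiv K hAB).finrank_eq, add_comm,
    Submodule.finrank_quotient_add_finrank]

theorem subquotientIn_le_ker_lsmul {r : R} (hr : ∀ x ∈ B, r • x ∈ A) :
    subquotientIn K A B C ≤ (Algebra.lsmul K K (Subquotient A C) r).ker := by
  rintro _ ⟨x, hx, rfl⟩
  exact (Submodule.Quotient.mk_eq_zero _).2 (hr x hx)

theorem finrank_subquotient_le_finrank_ker_lsmul [FiniteDimensional K (Subquotient A C)]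
    (hBC : B ≤ C) {r : R} (hr : ∀ x ∈ B, r • x ∈ A) :
    Module.finrank K (Subquotient A B) ≤
      Module.finrank K (Algebra.lsmul K K (Subquotient A C) r).ker := by
  rw [(subquotientEquivSubquotientIn K hBC).finrank_eq]
  exact Submodule.finrank_mono (subquotientIn_le_ker_lsmul K hr)

theorem finrank_subquotient_add_le_finrank_ker_lsmul_add
    [FiniteDimensional K (Subquotient A C)] (hAB : A ≤ B) (hAB' : A ≤ B') (hBC : B ≤ C)
    (hBC' : B' ≤ C) {r : R} (hr : ∀ x ∈ B, r • x ∈ A) (hr' : ∀ x ∈ B', r • x ∈ A) :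
    Module.finrank K (Subquotient A B) + Module.finrank K (Subquotient A B') ≤
      Module.finrank K (Algebra.lsmul K K (Subquotient A C) r).ker +
        Module.finrank K (Subquotient A (B ⊓ B')) := by
  rw [(subquotientEquivSubquotientIn K hBC).finrank_eq,
    (subquotientEquivSubquotientIn K hBC').finrank_eq,
    (subquotientEquivSubquotientIn K (inf_le_left.trans hBC)).finrank_eq,
    ← subquotientIn_inf K hAB hAB', ← Submodule.finrank_sup_add_finrank_inf_eq]
  gcongr
  exact Submodule.finrank_mono
    (sup_le (subquotientIn_le_ker_lsmul K hr) (subquotientIn_le_ker_lsmul K hr'))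

end Subquotient

theorem quotSmul_eq_lsmul (m : ℕ) (p : ℂ[X]) (A C : SubM m) :
    quotSmul m p A C = Algebra.lsmul ℂ ℂ (QuotMod m A C) p :=
  rfl

theorem finrank_ker_quotSmul_X_sub_C_le (m : ℕ) (a : ℂ) (A C : SubM m) :
    Module.finrank ℂ (LinearMap.ker (quotSmul m (X - Polynomial.C a) A C)) ≤ m := by
  have hrank : Module.rank ℂ[X] (KM m) = m := by
    rw [← IsFractionRing.rank_right_eq ℂ[X] (KM m) (S := RatFunc ℂ), rank_fin_fun]
  rw [quotSmul_eq_lsmul]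
  refine Module.finrank_le_of_rank_le (le_trans ?_ (C.rank_le.trans_eq hrank))
  have : Module.IsTorsionFree ℂ[X] (RatFunc ℂ) := inferInstance
  simpa only [Cardinal.lift_id] using
    lift_rank_ker_lsmul_X_sub_C_le _ (A.comap C.subtype).mkQ_surjective a

theorem IsZPair.second_chain_step {m n j : ℕ} {k : ℕ → ℕ} {w : ℕ → ℂ} {L L' : ℕ → SubM m}
    (hZ : IsZPair m n (j + 1) k w L L') (hj : j + 2 ≤ n) :
    L j ≤ L' (j + 1) ∧ L' (j + 1) ≤ L (j + 2) ∧ fdim m (L j) (L' (j + 1)) = k (j + 2) ∧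
      ∀ x ∈ L' (j + 1), zmul m (w (j + 2)) x ∈ L j := by
  obtain ⟨-, ⟨-, hle, -, hdim, hz⟩, heq⟩ := hZ
  rw [heq j (by lia), heq (j + 2) (by lia)]
  exact ⟨hle j (by lia), hle (j + 1) (by lia), by simpa [swapAt] using hdim j (by lia),
    by simpa [swapAt] using hz j (by lia)⟩

theorem statement8_general (m n : ℕ) (k : ℕ → ℕ) (w : ℕ → ℂ)
    (i : ℕ) (hi : 1 ≤ i) (hin : i + 1 ≤ n) (hww : w i = w (i + 1))
    (N : ℕ) (hN : N = min (k i + k (i + 1)) m)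
    (L L' : ℕ → SubM m) (hZ : IsZPair m n i k w L L')
    (d : ℕ)
    (hd : d = Module.finrank ℂ
      ↥(LinearMap.ker
        (quotSmul m (Polynomial.X - Polynomial.C (w i)) (L (i - 1)) (L (i + 1))))) :
    (k (i + 1) ≤ d ∧ d ≤ N) ∧
    ∃ s ≤ N - k (i + 1),
      k (i + 1) + s ≤ d ∧ k i - s ≤ fdim m (L (i - 1)) (L i ⊓ L' i) := by
  obtain ⟨j, rfl⟩ := Nat.exists_eq_add_of_le' hi
  rw [Nat.add_sub_cancel] at hd ⊢
  obtain ⟨hAB', hBC', hdimB', hzB'⟩ := hZ.second_chain_step hin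
  obtain ⟨⟨-, hle, hfin, hdim, hz⟩, -, -⟩ := hZ
  have hAB : L j ≤ L (j + 1) := hle j (by lia)
  have hBC : L (j + 1) ≤ L (j + 2) := hle (j + 1) (by lia)
  have hdimB : fdim m (L j) (L (j + 1)) = k (j + 1) := hdim j (by lia)
  have hdimC : fdim m (L (j + 1)) (L (j + 2)) = k (j + 2) := hdim (j + 1) (by lia)
  have hzB : ∀ x ∈ L (j + 1), zmul m (w (j + 1)) x ∈ L j := hz j (by lia)
  rw [← hww] at hzB'
  have := hfin j (by lia)
  have := hfin (j + 1) (by lia)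
  have := finiteDimensional_subquotient_trans ℂ hAB hBC
  have hlower : k (j + 2) ≤ d :=
    hd ▸ hdimB' ▸ finrank_subquotient_le_finrank_ker_lsmul ℂ hBC' hzB'
  have hle_sum : d ≤ k (j + 1) + k (j + 2) :=
    calc d ≤ Module.finrank ℂ (Subquotient (L j) (L (j + 2))) := hd ▸ Submodule.finrank_le _
      _ = k (j + 1) + k (j + 2) := by
          rw [← finrank_subquotient_add_finrank_subquotient ℂ hAB hBC, ← hdimB, ← hdimC]
          rfl
  have hle_m : d ≤ m := hd ▸ finrank_ker_quotSmul_X_sub_C_le m _ _ _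
  have hinf : k (j + 1) + k (j + 2) ≤ d + fdim m (L j) (L (j + 1) ⊓ L' (j + 1)) :=
    hd ▸ hdimB ▸ hdimB' ▸
      finrank_subquotient_add_le_finrank_ker_lsmul_add ℂ hAB hAB' hBC hBC' hzB hzB'
  have hupper : d ≤ N := hN ▸ le_min hle_sum hle_m
  exact ⟨⟨hlower, hupper⟩, d - k (j + 2), Nat.sub_le_sub_right hupper _, by lia, by lia⟩

/-- when `w_i = w_{i+1} = w` and `k_i ≤ k_{i+1}`, for every point of
`Z(k)^i_w` one has `k_{i+1} ≤ dim ker((z-w)|_{L_{i+1}/L_{i-1}}) ≤ N` where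
`N = min(k_i+k_{i+1}, m)`; consequently `Z(k)^i_w` is the union of the subsets
`Z_s(k)^i_w`, `s = 0,…,N-k_{i+1}`. -/
theorem statement8 (m : ℕ) (hm : 2 ≤ m) (n : ℕ) (k : ℕ → ℕ) (w : ℕ → ℂ)
    (hk : ∀ j, 1 ≤ j → j ≤ n → 1 ≤ k j ∧ k j ≤ m - 1)
    (i : ℕ) (hi : 1 ≤ i) (hin : i + 1 ≤ n)
    (hww : w i = w (i + 1)) (hkk : k i ≤ k (i + 1))
    (N : ℕ) (hN : N = min (k i + k (i + 1)) m)
    (L L' : ℕ → SubM m) (hZ : IsZPair m n i k w L L')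
    (d : ℕ)
    (hd : d = Module.finrank ℂ
      ↥(LinearMap.ker
        (quotSmul m (Polynomial.X - Polynomial.C (w i)) (L (i - 1)) (L (i + 1))))) :
    (k (i + 1) ≤ d ∧ d ≤ N) ∧
    ∃ s ≤ N - k (i + 1),
      k (i + 1) + s ≤ d ∧ k i - s ≤ fdim m (L (i - 1)) (L i ⊓ L' i) := by
  exact statement8_general m n k w i hi hin hww N hN L L' hZ d hd
end
end

section
/- Let (L₁, L'₁, L₂) ∈ Z(k,l) and let 0 ≤ s ≤ N−l. Suppose dim_ℂ ker(z|_{L₂/L₀}) ≥ l+s, dim_ℂ((L₁ ∩ L'₁)/L₀) ≥ k−s, and dim_ℂ ker(z|_{L₂/L₀}) + dim_ℂ((L₁ ∩ L'₁)/L₀) ≤ k+l+1. Then there exists a unique pair (W₁, W₂) of R-submodules of K^m satisfying: L₀ ⊆ W₁ ⊆ L₁ ∩ L'₁, L₁ + L'₁ ⊆ W₂ ⊆ L₂, dim_ℂ(W₁/L₀) = k−s, dim_ℂ(W₂/L₀) = l+s, z·L₂ ⊆ W₁, and z·W₂ ⊆ L₀. -/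
open Polynomial

set_option synthInstance.maxHeartbeats 1000000
set_option maxHeartbeats 1000000

noncomputable section

/-- Multiplication by `z` as an `R`-linear endomorphism of `K^m`. -/
def zmul0 (m : ℕ) : KM m →ₗ[Polynomial ℂ] KM m :=
  (Polynomial.X : Polynomial ℂ) • LinearMap.id

/-- Membership in the two-strand correspondence `Z(k,l)`. -/
def InZkl (m k l : ℕ) (L₁ L₁' L₂ : SubM m) : Prop :=
  polyL0 m ≤ L₁ ∧ L₁ ≤ L₂ ∧ polyL0 m ≤ L₁' ∧ L₁' ≤ L₂ ∧
  fdim m (polyL0 m) L₁ = k ∧ fdim m (polyL0 m) L₁' = l ∧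
  fdim m (polyL0 m) L₂ = k + l ∧
  (∀ x ∈ L₁, zmul0 m x ∈ polyL0 m) ∧ (∀ x ∈ L₁', zmul0 m x ∈ polyL0 m) ∧
  (∀ x ∈ L₂, zmul0 m x ∈ L₁) ∧ (∀ x ∈ L₂, zmul0 m x ∈ L₁')

/-!
Put `P = z L₂ + L₀` and `Q = {x ∈ L₂ | z x ∈ L₀}`, and take all dimensions modulo `L₀`. The
conditions on the pair say exactly that `W₁` lies between `P` and `L₁ ∩ L'₁` and that `W₂` lies
between `L₁ + L'₁` and `Q`. Rank-nullity and the dimension formula for a sum show that each of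
these two intervals has relative dimension `dim Q + dim (L₁ ∩ L'₁) - dim L₂ ≤ 1`. In such an
interval the only submodules of a prescribed dimension are the two ends.
-/

section RelFinrank

variable (F : Type*) {R V V' : Type*} [Field F] [CommRing R] [Algebra F R]
  [AddCommGroup V] [Module F V] [Module R V] [IsScalarTower F R V]
  [AddCommGroup V'] [Module F V'] [Module R V'] [IsScalarTower F R V']

/-- The relative dimension `dim_F (B / (A ∩ B))` of `B` over `A`, the linear analogue of
`Subgroup.relIndex`. It is `0` when the quotient is infinite-dimensional. -/
def relFinrank (A B : Submodule R V) : ℕ :=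
  Module.finrank F (B ⧸ A.submoduleOf B)

lemma relFinrank_ker (f : V →ₗ[R] V') (B : Submodule R V) :
    relFinrank F (LinearMap.ker f) B = Module.finrank F (B.map f) := by
  have hker : LinearMap.ker (f.domRestrict B) = (LinearMap.ker f).submoduleOf B :=
    f.ker_domRestrict B
  rw [relFinrank, ← hker, ← LinearMap.range_domRestrict]
  exact ((f.domRestrict B).quotKerEquivRange.restrictScalars F).finrank_eq

lemma relFinrank_eq_finrank_map_mkQ (A B : Submodule R V) :
    relFinrank F A B = Module.finrank F (B.map A.mkQ) := by
  rw [← relFinrank_ker, Submodule.ker_mkQ]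

lemma relFinrank_comap (f : V →ₗ[R] V') (A : Submodule R V') (B : Submodule R V) :
    relFinrank F (A.comap f) B = relFinrank F A (B.map f) := by
  rw [relFinrank_eq_finrank_map_mkQ F A, ← Submodule.map_comp, ← relFinrank_ker,
    LinearMap.ker_comp, Submodule.ker_mkQ]

lemma relFinrank_sup_left (A B : Submodule R V) :
    relFinrank F A (A ⊔ B) = relFinrank F A B := by
  rw [relFinrank_eq_finrank_map_mkQ, Submodule.map_sup, Submodule.mkQ_map_self, bot_sup_eq,
    ← relFinrank_eq_finrank_map_mkQ]

lemma inf_relFinrank_left (A B : Submodule R V) :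
    relFinrank F (A ⊓ B) A = relFinrank F B A := by
  rw [relFinrank, relFinrank, Submodule.submoduleOf, Submodule.comap_inf,
    Submodule.comap_subtype_self, top_inf_eq, Submodule.submoduleOf]

lemma finrank_map_mkQ_submoduleOf (A B C : Submodule R V) :
    Module.finrank F ((B.submoduleOf C).map (A.submoduleOf C).mkQ) = relFinrank F A (C ⊓ B) := by
  rw [← relFinrank_eq_finrank_map_mkQ, Submodule.submoduleOf, relFinrank_comap,
    Submodule.submoduleOf, Submodule.map_comap_subtype]

lemma finrank_torsionBy_quotient (A B : Submodule R V) (z : R) :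
    Module.finrank F (Submodule.torsionBy R (B ⧸ A.submoduleOf B) z) =
      relFinrank F A (B ⊓ A.comap (LinearMap.lsmul R V z)) := by
  have hcomap : (A.comap (LinearMap.lsmul R V z)).submoduleOf B =
      (Submodule.torsionBy R (B ⧸ A.submoduleOf B) z).comap (A.submoduleOf B).mkQ := by
    ext x
    exact (Submodule.Quotient.mk_eq_zero (A.submoduleOf B) (x := z • x)).symm
  rw [← finrank_map_mkQ_submoduleOf, hcomap,
    Submodule.map_comap_eq_of_surjective (Submodule.mkQ_surjective _)]

lemma finite_quotient_submoduleOf_of_le (A : Submodule R V) {B C : Submodule R V} (hBC : B ≤ C)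
    [Module.Finite F (C ⧸ A.submoduleOf C)] : Module.Finite F (B ⧸ A.submoduleOf B) := by
  let i : (B ⧸ A.submoduleOf B) →ₗ[R] C ⧸ A.submoduleOf C :=
    Submodule.mapQ _ _ (Submodule.inclusion hBC) le_rfl
  have hi : Function.Injective i := by
    rw [← LinearMap.ker_eq_bot]
    refine Submodule.ker_liftQ_eq_bot _ _ _ ?_
    rw [LinearMap.ker_comp, Submodule.ker_mkQ]
    exact le_rfl
  exact Module.Finite.of_injective (i.restrictScalars F) hi

lemma relFinrank_add_relFinrank {A B C : Submodule R V} (hAB : A ≤ B) (hBC : B ≤ C)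
    [Module.Finite F (C ⧸ A.submoduleOf C)] :
    relFinrank F A B + relFinrank F B C = relFinrank F A C := by
  have hAB' : A.submoduleOf C ≤ B.submoduleOf C := Submodule.comap_mono hAB
  have hBC' := (Submodule.quotientQuotientEquivQuotient _ _ hAB').restrictScalars F |>.finrank_eq
  rw [← inf_eq_right.2 hBC, ← finrank_map_mkQ_submoduleOf, inf_eq_right.2 hBC, relFinrank,
    ← hBC', add_comm]
  exact Submodule.finrank_quotient_add_finrank
    (((B.submoduleOf C).map (A.submoduleOf C).mkQ).restrictScalars F)

lemma relFinrank_sup_add_relFinrank_inf {A B C : Submodule R V} (hAB : A ≤ B) (hAC : A ≤ C)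
    [Module.Finite F (↥(B ⊔ C) ⧸ A.submoduleOf (B ⊔ C))] :
    relFinrank F A (B ⊔ C) + relFinrank F A (B ⊓ C) = relFinrank F A B + relFinrank F A C := by
  have := finite_quotient_submoduleOf_of_le F A (le_sup_right : C ≤ B ⊔ C)
  rw [← relFinrank_add_relFinrank F hAB le_sup_left, relFinrank_sup_left,
    ← relFinrank_add_relFinrank F (le_inf hAB hAC) inf_le_right, inf_comm B C,
    inf_relFinrank_left]
  ring

lemma relFinrank_eq_zero_iff {B C : Submodule R V} [Module.Finite F (C ⧸ B.submoduleOf C)] :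
    relFinrank F B C = 0 ↔ C ≤ B := by
  rw [relFinrank, Module.finrank_zero_iff, Submodule.Quotient.subsingleton_iff,
    Submodule.submoduleOf_eq_top]

lemma eq_of_le_of_relFinrank_eq {A B C : Submodule R V} (hAB : A ≤ B) (hBC : B ≤ C)
    [Module.Finite F (C ⧸ A.submoduleOf C)] (h : relFinrank F A B = relFinrank F A C) :
    B = C := by
  have hAB' : A.submoduleOf C ≤ B.submoduleOf C := Submodule.comap_mono hAB
  have hfin : Module.Finite F (C ⧸ B.submoduleOf C) :=
    Module.Finite.of_surjective ((Submodule.factor hAB').restrictScalars F)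
      (Submodule.factor_surjective hAB')
  have hadd := relFinrank_add_relFinrank F hAB hBC
  exact hBC.antisymm ((relFinrank_eq_zero_iff F).1 (by omega))

lemma existsUnique_relFinrank_eq {A B C : Submodule R V} (hAB : A ≤ B) (hBC : B ≤ C)
    [Module.Finite F (C ⧸ A.submoduleOf C)] {n : ℕ} (hB : relFinrank F A B ≤ n)
    (hC : n ≤ relFinrank F A C) (hgap : relFinrank F A C ≤ relFinrank F A B + 1) :
    ∃! W : Submodule R V, W ∈ Set.Icc B C ∧ relFinrank F A W = n := by
  obtain hn | hn : n = relFinrank F A B ∨ n = relFinrank F A C := by omega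
  · refine ⟨B, ⟨⟨le_rfl, hBC⟩, hn.symm⟩, fun W ⟨⟨hBW, hWC⟩, hW⟩ => ?_⟩
    have := finite_quotient_submoduleOf_of_le F A hWC
    exact (eq_of_le_of_relFinrank_eq F hAB hBW (hn.symm.trans hW.symm)).symm
  · exact ⟨C, ⟨⟨hBC, le_rfl⟩, hn.symm⟩, fun W ⟨⟨hBW, hWC⟩, hW⟩ =>
      eq_of_le_of_relFinrank_eq F (hAB.trans hBW) hWC (hW.trans hn)⟩

lemma relFinrank_sup_map_add_finrank_torsionBy {A B : Submodule R V} (hAB : A ≤ B) (z : R)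
    [Module.Finite F (B ⧸ A.submoduleOf B)] :
    relFinrank F A (A ⊔ B.map (LinearMap.lsmul R V z)) +
      Module.finrank F (Submodule.torsionBy R (B ⧸ A.submoduleOf B) z) = relFinrank F A B := by
  have hA : A ≤ B ⊓ A.comap (LinearMap.lsmul R V z) :=
    le_inf hAB fun x hx => A.smul_mem z hx
  rw [relFinrank_sup_left, ← relFinrank_comap, finrank_torsionBy_quotient, add_comm,
    ← inf_relFinrank_left F B, relFinrank_add_relFinrank F hA inf_le_left]

end RelFinrank

theorem statement11_general (F : Type*) {R V : Type*} [Field F] [CommRing R] [Algebra F R]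
    [AddCommGroup V] [Module F V] [Module R V] [IsScalarTower F R V] (z : R)
    {L₀ L₁ L₁' L₂ : Submodule R V} (h₀₁ : L₀ ≤ L₁) (h₁₂ : L₁ ≤ L₂) (h₀₁' : L₀ ≤ L₁')
    (h₁₂' : L₁' ≤ L₂) (hz₁ : ∀ x ∈ L₁, z • x ∈ L₀) (hz₁' : ∀ x ∈ L₁', z • x ∈ L₀)
    (hz₂ : ∀ x ∈ L₂, z • x ∈ L₁) (hz₂' : ∀ x ∈ L₂, z • x ∈ L₁')
    [Module.Finite F (L₂ ⧸ L₀.submoduleOf L₂)]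
    (hL₂ : relFinrank F L₀ L₁ + relFinrank F L₀ L₁' = relFinrank F L₀ L₂)
    {a b : ℕ} (hab : a + b = relFinrank F L₀ L₂)
    (hb : b ≤ Module.finrank F (Submodule.torsionBy R (L₂ ⧸ L₀.submoduleOf L₂) z))
    (ha : a ≤ relFinrank F L₀ (L₁ ⊓ L₁'))
    (hgap : Module.finrank F (Submodule.torsionBy R (L₂ ⧸ L₀.submoduleOf L₂) z) +
      relFinrank F L₀ (L₁ ⊓ L₁') ≤ relFinrank F L₀ L₂ + 1) :
    ∃! W : Submodule R V × Submodule R V,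
      L₀ ≤ W.1 ∧ W.1 ≤ L₁ ⊓ L₁' ∧ L₁ ⊔ L₁' ≤ W.2 ∧ W.2 ≤ L₂ ∧
      relFinrank F L₀ W.1 = a ∧ relFinrank F L₀ W.2 = b ∧
      (∀ x ∈ L₂, z • x ∈ W.1) ∧ (∀ x ∈ W.2, z • x ∈ L₀) := by
  set P := L₀ ⊔ L₂.map (LinearMap.lsmul R V z)
  set Q := L₂ ⊓ L₀.comap (LinearMap.lsmul R V z)
  have h₀P : L₀ ≤ P := le_sup_left
  have hP : P ≤ L₁ ⊓ L₁' := sup_le (le_inf h₀₁ h₀₁') <|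
    Submodule.map_le_iff_le_comap.2 fun x hx => ⟨hz₂ x hx, hz₂' x hx⟩
  have hQ : L₁ ⊔ L₁' ≤ Q := le_inf (sup_le h₁₂ h₁₂') (sup_le hz₁ hz₁')
  have finite_of_le {B : Submodule R V} (hB : B ≤ L₂) :=
    finite_quotient_submoduleOf_of_le F L₀ hB
  have := finite_of_le (inf_le_left.trans h₁₂ : L₁ ⊓ L₁' ≤ L₂)
  have := finite_of_le (sup_le h₁₂ h₁₂')
  have := finite_of_le (inf_le_left : Q ≤ L₂)
  have rank_nullity : relFinrank F L₀ P + _ = _ :=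
    relFinrank_sup_map_add_finrank_torsionBy F (h₀₁.trans h₁₂) z
  have dim_sup := relFinrank_sup_add_relFinrank_inf F h₀₁ h₀₁'
  have dim_Q : _ = relFinrank F L₀ Q := finrank_torsionBy_quotient F L₀ L₂ z
  obtain ⟨W₁, ⟨⟨hPW₁, hW₁⟩, dim_W₁⟩, unique₁⟩ := existsUnique_relFinrank_eq F (n := a)
    h₀P hP (by omega) ha (by omega)
  obtain ⟨W₂, ⟨⟨hW₂, hW₂Q⟩, dim_W₂⟩, unique₂⟩ := existsUnique_relFinrank_eq F (n := b)
    (h₀₁.trans le_sup_left) hQ (by omega) (by omega) (by omega)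
  refine ⟨(W₁, W₂), ?_, ?_⟩
  · exact ⟨h₀P.trans hPW₁, hW₁, hW₂, hW₂Q.trans inf_le_left, dim_W₁, dim_W₂,
      fun x hx => hPW₁ (le_sup_right (a := L₀) ⟨x, hx, rfl⟩), fun x hx => (hW₂Q hx).2⟩
  · rintro ⟨U₁, U₂⟩ ⟨h₀U₁, hU₁, hU₂, hU₂L₂, dim_U₁, dim_U₂, hzL₂, hzU₂⟩
    have hPU₁ : P ≤ U₁ := sup_le h₀U₁ (Submodule.map_le_iff_le_comap.2 hzL₂)
    have hU₂Q : U₂ ≤ Q := le_inf hU₂L₂ hzU₂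
    exact Prod.ext (unique₁ U₁ ⟨⟨hPU₁, hU₁⟩, dim_U₁⟩) (unique₂ U₂ ⟨⟨hU₂, hU₂Q⟩, dim_U₂⟩)

/-- on `Z^o_s(k,l)` there is a unique pair `(W₁, W₂)` with
`L₀ ⊆ W₁ ⊆ L₁ ∩ L'₁`, `L₁ + L'₁ ⊆ W₂ ⊆ L₂`, `dim(W₁/L₀) = k-s`, `dim(W₂/L₀) = l+s`,
`z·L₂ ⊆ W₁` and `z·W₂ ⊆ L₀`. -/
theorem statement11 (m : ℕ) (hm : 2 ≤ m) (k l : ℕ)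
    (hk1 : 1 ≤ k) (hkl : k ≤ l) (hl : l ≤ m - 1) (hsum : k + l ≤ 2 * m - 2)
    (N : ℕ) (hN : N = min (k + l) m)
    (L₁ L₁' L₂ : SubM m) (hZ : InZkl m k l L₁ L₁' L₂)
    (s : ℕ) (hs : s ≤ N - l)
    (d : ℕ)
    (hd : d = Module.finrank ℂ
      ↥(LinearMap.ker (quotSmul m Polynomial.X (polyL0 m) L₂)))
    (hds : l + s ≤ d)
    (hint : k - s ≤ fdim m (polyL0 m) (L₁ ⊓ L₁'))
    (ho : d + fdim m (polyL0 m) (L₁ ⊓ L₁') ≤ k + l + 1) :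
    ∃! W : SubM m × SubM m,
      polyL0 m ≤ W.1 ∧ W.1 ≤ L₁ ⊓ L₁' ∧ L₁ ⊔ L₁' ≤ W.2 ∧ W.2 ≤ L₂ ∧
      fdim m (polyL0 m) W.1 = k - s ∧ fdim m (polyL0 m) W.2 = l + s ∧
      (∀ x ∈ L₂, zmul0 m x ∈ W.1) ∧ (∀ x ∈ W.2, zmul0 m x ∈ polyL0 m) := by
  obtain ⟨h₀₁, h₁₂, h₀₁', h₁₂', (dim₁ : relFinrank ℂ _ L₁ = k),
    (dim₁' : relFinrank ℂ _ L₁' = l), (dim₂ : relFinrank ℂ _ L₂ = k + l),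
    hz₁, hz₁', hz₂, hz₂'⟩ := hZ
  have : Module.Finite ℂ (L₂ ⧸ (polyL0 m).submoduleOf L₂) :=
    Module.finite_of_finrank_pos (show 0 < relFinrank ℂ (polyL0 m) L₂ by omega)
  subst hd
  exact statement11_general ℂ X h₀₁ h₁₂ h₀₁' h₁₂' hz₁ hz₁' hz₂ hz₂' (by omega) (by omega)
    hds hint (by rw [dim₂]; exact ho)
end
end
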